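/- arXiv:1902.08817 — 2 statements merged into one kernel-verified Lean document; each statement's English description precedes it below -/
import Mathlib

section
/- Let p_n/q_n be the n-th continued fraction convergent of π, let v₂ = v₂(p_n) be the 2-adic valuation of p_n, and set x_n = ((2^(2+2v₂) + 1)/2^(2+2v₂))·π·p_n. Then |sin((2x_n + 1)·p_n)| is bounded above and below by positive absolute constants for all sufficiently large n; more precisely |sin((2x_n+1)p_n)| = |cos(p_n − π q_n)| → 1 as n → ∞. -/
open Real Filter

/-!
Write `p = 2 ^ v * m` with `m` odd. Since `m ^ 2 ≡ 1 [MOD 4]`, the perturbation `2 ^ (-(2 + 2 * v))`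
in `x` contributes `2 * π * p ^ 2 / 2 ^ (2 + 2 * v) = π * m ^ 2 / 2`, which is `π / 2` modulo
`2 * π`, to the angle `(2 * x + 1) * p`; hence the sine there is exactly `cos p`. Subtracting the
multiple `π * q` of `π` only changes the sign of `cos p`, and `p - π * q → 0`, so the absolute value
tends to `cos 0 = 1`.
-/

section Convergents

open GenContFract
open GenContFract (of)

variable {K : Type*} [Field K] [LinearOrder K] [IsStrictOrderedRing K] [FloorRing K]

lemma one_le_dens_of (v : K) (n : ℕ) : 1 ≤ (of v).dens n := by
  have dens_mono : Monotone (of v).dens := monotone_nat_of_le_succ fun _ ↦ of_den_mono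
  simpa only [zeroth_den_eq_one] using dens_mono n.zero_le

lemma natCast_add_one_le_dens_of_succ {v : K} {n : ℕ} (h : ¬(of v).TerminatedAt n) :
    (n + 1 : K) ≤ (of v).dens (n + 1) := by
  have le_fib : n + 1 ≤ Nat.fib (n + 2) := by simpa using Nat.le_fib_add_one (n + 2)
  calc (n + 1 : K) ≤ Nat.fib (n + 2) := by exact_mod_cast le_fib
    _ ≤ (of v).dens (n + 1) := succ_nth_fib_le_of_nth_den (Or.inr h)

lemma abs_nums_of_sub_mul_dens_of_le (v : K) (n : ℕ) :
    |(of v).nums n - v * (of v).dens n| ≤ 1 / (n + 1) := by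
  have dens_pos : 0 < (of v).dens n := one_pos.trans_le (one_le_dens_of v n)
  have abs_eq : |(of v).nums n - v * (of v).dens n| =
      |v - (of v).convs n| * (of v).dens n := by
    rw [conv_eq_num_div_den, ← abs_of_pos dens_pos, ← abs_mul, abs_of_pos dens_pos,
      sub_mul, div_mul_cancel₀ _ dens_pos.ne', abs_sub_comm]
  rw [abs_eq]
  by_cases h : (of v).TerminatedAt n
  · rw [← of_correctness_of_terminatedAt h, sub_self, abs_zero, zero_mul]
    positivity
  · calc |v - (of v).convs n| * (of v).dens n
        ≤ 1 / ((of v).dens n * (of v).dens (n + 1)) * (of v).dens n := by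
          gcongr
          exact abs_sub_convs_le h
      _ = 1 / (of v).dens (n + 1) := by field_simp
      _ ≤ 1 / (n + 1) := by
          gcongr
          exact natCast_add_one_le_dens_of_succ h

variable [TopologicalSpace K] [OrderTopology K]

lemma tendsto_nums_of_sub_mul_dens_of (v : K) :
    Tendsto (fun n ↦ (of v).nums n - v * (of v).dens n) atTop (nhds 0) := by
  have : Archimedean K := FloorRing.archimedean K
  have tendsto_bound : Tendsto (fun n : ℕ ↦ 1 / (n + 1 : K)) atTop (nhds 0) := by
    simp only [one_div]
    exact (tendsto_atTop_add_const_right _ 1 tendsto_natCast_atTop_atTop).inv_tendsto_atTop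
  exact (tendsto_zero_iff_abs_tendsto_zero _).2 <|
    tendsto_of_tendsto_of_tendsto_of_le_of_le tendsto_const_nhds tendsto_bound
      (fun _ ↦ abs_nonneg _) (abs_nums_of_sub_mul_dens_of_le v)

lemma eventually_pos_nums_of {v : K} (hv : 0 < v) :
    ∀ᶠ n in atTop, 0 < (of v).nums n := by
  filter_upwards [(tendsto_nums_of_sub_mul_dens_of v).eventually_const_lt (neg_lt_zero.2 hv)]
    with n hn
  have v_le : v ≤ v * (of v).dens n := le_mul_of_one_le_right hv.le (one_le_dens_of v n)
  linarith

end Convergents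

section DyadicPerturbation

lemma exists_sq_eq_two_pow_mul_four_mul_add_one {n : ℕ} (hn : n ≠ 0) :
    ∃ k : ℕ, n ^ 2 = 2 ^ (2 * padicValNat 2 n) * (4 * k + 1) := by
  have odd_part : Odd (ordCompl[2] n) := by
    simpa [← even_iff_two_dvd] using Nat.not_dvd_ordCompl Nat.prime_two hn
  obtain ⟨j, hj⟩ := odd_part
  refine ⟨j ^ 2 + j, ?_⟩
  calc n ^ 2 = (2 ^ padicValNat 2 n * (2 * j + 1)) ^ 2 := by
        rw [← hj, ← Nat.factorization_def n Nat.prime_two, Nat.ordProj_mul_ordCompl_eq_self]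
    _ = 2 ^ (2 * padicValNat 2 n) * (4 * (j ^ 2 + j) + 1) := by ring

/-- The number `(1 + 2 ^ (-(2 + 2 * v))) * π * p`, where `v` is the 2-adic valuation of `p`;
this is `x_n` for `p = p_n`. -/
noncomputable def dyadicPerturbation (p : ℕ) : ℝ :=
  (2 ^ (2 + 2 * padicValNat 2 p) + 1) / 2 ^ (2 + 2 * padicValNat 2 p) * π * p

lemma sin_two_mul_dyadicPerturbation_add_one_mul {p : ℕ} (hp : p ≠ 0) :
    sin ((2 * dyadicPerturbation p + 1) * p) = cos p := by
  obtain ⟨k, hk⟩ := exists_sq_eq_two_pow_mul_four_mul_add_one hp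
  have hk_real : (p : ℝ) ^ 2 = 2 ^ (2 * padicValNat 2 p) * (4 * k + 1) := by exact_mod_cast hk
  have angle_eq : (2 * dyadicPerturbation p + 1) * p =
      p + π / 2 + (p ^ 2 + k : ℕ) * (2 * π) := by
    calc (2 * dyadicPerturbation p + 1) * p
        = p + 2 * π * p ^ 2 + π / 2 * (p ^ 2 / 2 ^ (2 * padicValNat 2 p)) := by
          rw [dyadicPerturbation, pow_add]
          field_simp
          ring
      _ = p + 2 * π * p ^ 2 + π / 2 * (4 * k + 1) := by
          congr 2
          rw [hk_real, mul_div_cancel_left₀ _ (by positivity)]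
      _ = p + π / 2 + (p ^ 2 + k : ℕ) * (2 * π) := by
          push_cast
          ring
  rw [angle_eq, sin_add_nat_mul_two_pi, sin_add_pi_div_two]

lemma abs_cos_sub_pi_mul_natCast (y : ℝ) (n : ℕ) : |cos (y - π * n)| = |cos y| := by
  rw [mul_comm, cos_sub_nat_mul_pi, abs_mul, abs_neg_one_pow, one_mul]

lemma abs_sin_two_mul_dyadicPerturbation_add_one_mul {p : ℕ} (hp : p ≠ 0) (q : ℕ) :
    |sin ((2 * dyadicPerturbation p + 1) * p)| = |cos (p - π * q)| := by
  rw [sin_two_mul_dyadicPerturbation_add_one_mul hp, abs_cos_sub_pi_mul_natCast]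

end DyadicPerturbation

theorem abs_sin_shift_bounded_and_tendsto_one_general {ι : Type*} {l : Filter ι} {p q : ι → ℕ}
    (hp : ∀ᶠ i in l, p i ≠ 0) (hpq : Tendsto (fun i ↦ (p i : ℝ) - π * q i) l (nhds 0)) :
    (∃ c₁ c₂ : ℝ, 0 < c₁ ∧ 0 < c₂ ∧ ∀ᶠ i in l,
      c₁ ≤ |sin ((2 * dyadicPerturbation (p i) + 1) * p i)| ∧
      |sin ((2 * dyadicPerturbation (p i) + 1) * p i)| ≤ c₂) ∧
    (∀ᶠ i in l, |sin ((2 * dyadicPerturbation (p i) + 1) * p i)| = |cos (p i - π * q i)|) ∧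
    Tendsto (fun i ↦ |sin ((2 * dyadicPerturbation (p i) + 1) * p i)|) l (nhds 1) := by
  have abs_sin_eq : ∀ᶠ i in l,
      |sin ((2 * dyadicPerturbation (p i) + 1) * p i)| = |cos (p i - π * q i)| :=
    hp.mono fun i hi ↦ abs_sin_two_mul_dyadicPerturbation_add_one_mul hi (q i)
  have tendsto_abs_cos : Tendsto (fun i ↦ |cos (p i - π * q i)|) l (nhds 1) := by
    simpa only [Function.comp_apply, cos_zero, abs_one] using
      ((continuous_cos.tendsto 0).comp hpq).abs
  have tendsto_abs_sin := tendsto_abs_cos.congr' (abs_sin_eq.mono fun _ ↦ Eq.symm)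
  refine ⟨⟨1 / 2, 1, one_half_pos, one_pos, ?_⟩, abs_sin_eq, tendsto_abs_sin⟩
  filter_upwards [tendsto_abs_sin.eventually_const_le one_half_lt_one] with i hi
  exact ⟨hi, abs_sin_le_one _⟩

/-- Let `p n / q n` be the `n`-th continued fraction convergent of `π`, let
`v₂ = v₂(p n)` be the 2-adic valuation of `p n`, and set
`x n = ((2^(2+2v₂) + 1)/2^(2+2v₂))·π·(p n)`.  Then `|sin((2·x n + 1)·p n)|` is
bounded above and below by positive absolute constants for all sufficiently large `n`;
more precisely `|sin((2·x n+1)·p n)| = |cos(p n − π·q n)| → 1` as `n → ∞`. -/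
theorem abs_sin_shift_bounded_and_tendsto_one
    (p q : ℕ → ℕ)
    (hp : ∀ n, (p n : ℝ) = (GenContFract.of (π : ℝ)).nums n)
    (hq : ∀ n, (q n : ℝ) = (GenContFract.of (π : ℝ)).dens n)
    (x : ℕ → ℝ)
    (hx : ∀ n, x n =
      ((2 ^ (2 + 2 * padicValNat 2 (p n)) + 1 : ℝ) /
        (2 ^ (2 + 2 * padicValNat 2 (p n)) : ℝ)) * π * (p n : ℝ)) :
    (∃ c₁ c₂ : ℝ, 0 < c₁ ∧ 0 < c₂ ∧ ∃ N : ℕ, ∀ n : ℕ, N ≤ n →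
      c₁ ≤ |Real.sin ((2 * x n + 1) * (p n : ℝ))| ∧
      |Real.sin ((2 * x n + 1) * (p n : ℝ))| ≤ c₂) ∧
    (∃ N : ℕ, ∀ n : ℕ, N ≤ n →
      |Real.sin ((2 * x n + 1) * (p n : ℝ))| = |Real.cos ((p n : ℝ) - π * (q n : ℝ))|) ∧
    Tendsto (fun n : ℕ => |Real.sin ((2 * x n + 1) * (p n : ℝ))|) atTop (nhds 1) := by
  obtain rfl : x = fun n ↦ dyadicPerturbation (p n) := funext hx
  have p_ne_zero : ∀ᶠ n in atTop, p n ≠ 0 := by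
    simpa only [← hp, Nat.cast_pos, pos_iff_ne_zero] using eventually_pos_nums_of pi_pos
  have tendsto_sub : Tendsto (fun n ↦ (p n : ℝ) - π * q n) atTop (nhds 0) := by
    simpa only [hp, hq] using tendsto_nums_of_sub_mul_dens_of π
  simpa only [eventually_atTop] using
    abs_sin_shift_bounded_and_tendsto_one_general p_ne_zero tendsto_sub
end

section
/- There exists q₀ such that for all integers p and q with q ≥ q₀, the number π satisfies |π − p/q| ≥ 1/q^(7.6063). -/
open Real

/-!
With `y = v (1 - v)`, the period of
`(1 - 4 y) ^ (2 N + j) (25 y² - 14 y + 2) ^ (4 N) / y ^ (6 N + 1)` from `1 / 2` to `(2 + i) / 5` is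
a rational linear form in `1` and `π`, because the integrand is a combination of powers of `y` and
`arctan (1 / 2) + arctan (1 / 3) = π / 4`. On a suitable broken line the integrand is exponentially
small in `N`.

The denominators of the form divide `lcm (1, …, 8 N + 3)` up to constants and powers of `2`. Adding
an exact differential shows that the primes `p` with `p / 2 ≤ 2 N mod p < 2 p / 3` cancel, and the
prime number theorem, obtained from a Tauberian theorem of Wiener–Ikehara type, gives the growth of
what remains.

The periods satisfy a recurrence in `j` of order three. Hence if the forms for `j = 0, 1, 2` all
vanished at some rational number in place of `π / 4`, so would every form whose integrand is
`(1 - 4 y) ^ (2 N) (25 y² - 14 y + 2) ^ (4 N) / y ^ (6 N + 1)` times a polynomial in `y`, but one of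
these has a nonzero rational value. Comparing the sizes of the nonvanishing form and of its
coefficients, with `N` proportional to `log q`, bounds the irrationality measure of `π`.
-/

namespace Salikhov

open MeasureTheory Filter Topology Set Polynomial
open Nat (lcmUpto)

/-! ### The Fejér kernel -/

/-- The Fejér kernel `(sin (x / 2) / (x / 2)) ^ 2`, the Fourier transform of the triangle function
`t ↦ max (1 - |t|) 0`. At `x = 0` it takes the junk value `0` instead of `1`, which no integral
sees. -/
noncomputable def fejerKernel (x : ℝ) : ℝ := 2 * (1 - cos x) / x ^ 2

lemma fejerKernel_nonneg (x : ℝ) : 0 ≤ fejerKernel x :=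
  div_nonneg (by linarith [cos_le_one x]) (sq_nonneg x)

lemma fejerKernel_le (x : ℝ) : fejerKernel x ≤ 5 * (1 + x ^ 2)⁻¹ := by
  rcases eq_or_ne x 0 with rfl | hx
  · simp [fejerKernel]
  have hx_sq : 0 < x ^ 2 := by positivity
  rw [fejerKernel, ← div_eq_mul_inv, div_le_div_iff₀ hx_sq (by positivity)]
  nlinarith [neg_one_le_cos x, one_sub_sq_div_two_le_cos (x := x)]

lemma measurable_fejerKernel : Measurable fejerKernel := by
  unfold fejerKernel
  fun_prop

lemma integrable_fejerKernel : Integrable fejerKernel := by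
  refine (integrable_inv_one_add_sq.const_mul 5).mono'
    measurable_fejerKernel.aestronglyMeasurable (Eventually.of_forall fun x ↦ ?_)
  rw [norm_of_nonneg (fejerKernel_nonneg x)]
  exact fejerKernel_le x

lemma integral_fejerKernel_pos : 0 < ∫ x, fejerKernel x := by
  rw [integral_pos_iff_support_of_nonneg fejerKernel_nonneg integrable_fejerKernel]
  refine lt_of_lt_of_le (by simp) (measure_mono (s := Ioo 1 2) fun x hx ↦ ?_)
  have hx_pos : 0 < x := by linarith [hx.1]
  have hcos : cos x < 1 := cos_zero ▸
    cos_lt_cos_of_nonneg_of_le_pi le_rfl (by linarith [hx.2, pi_gt_three]) hx_pos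
  exact (div_pos (by linarith) (by positivity)).ne'

lemma hasDerivAt_cexp_I_mul_mul (x t : ℝ) :
    HasDerivAt (fun t : ℝ ↦ Complex.exp (Complex.I * t * x))
      (Complex.exp (Complex.I * t * x) * (Complex.I * x)) t := by
  have hlin : HasDerivAt (fun t : ℝ ↦ Complex.I * (t : ℂ) * x) (Complex.I * x) t := by
    simpa using ((Complex.ofRealCLM.hasDerivAt (x := t)).const_mul Complex.I).mul_const (x : ℂ)
  exact hlin.cexp

lemma integral_one_add_mul_cexp {x : ℝ} (hx : x ≠ 0) :
    ∫ t in (-1 : ℝ)..0, (1 + (t : ℂ)) * Complex.exp (Complex.I * t * x)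
      = 1 / (Complex.I * x) + (1 - Complex.exp (-(x * Complex.I))) / (x : ℂ) ^ 2 := by
  have hxc : (x : ℂ) ≠ 0 := mod_cast hx
  have hI := Complex.I_ne_zero
  rw [intervalIntegral.integral_eq_sub_of_hasDerivAt
    (f := fun t : ℝ ↦ (1 + (t : ℂ)) * Complex.exp (Complex.I * t * x) / (Complex.I * x)
      + Complex.exp (Complex.I * t * x) / (x : ℂ) ^ 2) (fun t _ ↦ ?_)
      (Continuous.intervalIntegrable (by fun_prop) _ _)]
  · have hexp : Complex.I * ((-1 : ℝ) : ℂ) * (x : ℂ) = -(x * Complex.I) := by push_cast; ring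
    rw [hexp]
    simp
    ring
  · refine (((((hasDerivAt_id t).ofReal_comp.const_add 1).mul
      (hasDerivAt_cexp_I_mul_mul x t)).div_const (Complex.I * x)).add
      ((hasDerivAt_cexp_I_mul_mul x t).div_const ((x : ℂ) ^ 2))).congr_deriv ?_
    simp only [id, Complex.ofReal_one]
    field_simp
    linear_combination Complex.I_sq

lemma integral_triangle_mul_cexp {x : ℝ} (hx : x ≠ 0) :
    ∫ t in (-1 : ℝ)..1, ((1 - |t| : ℝ) : ℂ) * Complex.exp (Complex.I * t * x)
      = fejerKernel x := by
  have hxc : (x : ℂ) ≠ 0 := mod_cast hx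
  have hcont : Continuous fun t : ℝ ↦ ((1 - |t| : ℝ) : ℂ) * Complex.exp (Complex.I * t * x) := by
    fun_prop
  have hleft (y : ℝ) : ∫ t in (-1 : ℝ)..0, ((1 - |t| : ℝ) : ℂ) * Complex.exp (Complex.I * t * y)
      = ∫ t in (-1 : ℝ)..0, (1 + (t : ℂ)) * Complex.exp (Complex.I * t * y) := by
    refine intervalIntegral.integral_congr fun t ht ↦ ?_
    rw [uIcc_of_le (by norm_num)] at ht
    simp only [abs_of_nonpos ht.2]
    push_cast
    ring
  have hright : ∫ t in (0 : ℝ)..1, ((1 - |t| : ℝ) : ℂ) * Complex.exp (Complex.I * t * x)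
      = ∫ t in (-1 : ℝ)..0, ((1 - |t| : ℝ) : ℂ) * Complex.exp (Complex.I * t * (-x : ℝ)) := by
    rw [← neg_zero, ← intervalIntegral.integral_comp_neg]
    simp
  rw [← intervalIntegral.integral_add_adjacent_intervals (b := 0)
    (hcont.intervalIntegrable _ _) (hcont.intervalIntegrable _ _), hright, hleft, hleft,
    integral_one_add_mul_cexp hx, integral_one_add_mul_cexp (neg_ne_zero.2 hx), fejerKernel]
  push_cast
  rw [Complex.cos, neg_mul, neg_neg]
  have hI := Complex.I_ne_zero
  field_simp
  ring

lemma integrable_fejerKernel_comp {l : ℝ} (hl : l ≠ 0) (y : ℝ) :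
    Integrable fun u ↦ fejerKernel (l * (u - y)) :=
  (integrable_fejerKernel.comp_mul_left' hl).comp_sub_right y

lemma tendsto_integral_Icc_fejerKernel :
    Tendsto (fun A : ℝ ↦ ∫ x in Icc (-A) A, fejerKernel x) atTop (𝓝 (∫ x, fejerKernel x)) :=
  (aecover_Icc tendsto_neg_atTop_atBot tendsto_id).integral_tendsto_of_countably_generated
    integrable_fejerKernel

lemma exists_integral_Icc_fejerKernel_gt {ε : ℝ} (hε : 0 < ε) :
    ∃ A > 0, (∫ x, fejerKernel x) * (1 - ε) < ∫ x in Icc (-A) A, fejerKernel x :=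
  ((eventually_gt_atTop (0 : ℝ)).and (tendsto_integral_Icc_fejerKernel.eventually
    (lt_mem_nhds (by nlinarith [integral_fejerKernel_pos])))).exists

/-! ### A Tauberian theorem -/

/-- The elementary hypotheses of the Wiener–Ikehara theorem on a counting function `M`, expressed
for the normalization `B u = M (exp u) / exp u`: `M` is nondecreasing, vanishes on `(0, 1)`, and
is bounded by `C * x`. -/
structure IsNormalizedCounting (B : ℝ → ℝ) (C : ℝ) : Prop where
  nonneg : ∀ u, 0 ≤ B u
  le : ∀ u, B u ≤ C
  eq_zero_of_neg : ∀ u < 0, B u = 0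
  monotone_mul_exp : Monotone fun u ↦ B u * exp u

namespace IsNormalizedCounting

variable {B : ℝ → ℝ} {C : ℝ} (hB : IsNormalizedCounting B C)

include hB

lemma measurable : Measurable B := by
  have hdiv : B = fun u ↦ B u * exp u / exp u := by
    ext u
    field_simp
  rw [hdiv]
  exact hB.monotone_mul_exp.measurable.div measurable_exp

lemma le_mul_exp {u v : ℝ} (huv : u ≤ v) : B u ≤ B v * exp (v - u) := by
  rw [exp_sub, ← mul_div_assoc, le_div_iff₀ (exp_pos u)]
  exact hB.monotone_mul_exp huv

lemma norm_sub_one_le (u : ℝ) : ‖B u - 1‖ ≤ C + 1 := by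
  rw [norm_eq_abs, abs_le]
  constructor <;> linarith [hB.nonneg u, hB.le u]

lemma integrable_comp_mul {f g : ℝ → ℝ} (hf : Measurable f) (hg : Integrable g) :
    Integrable fun x ↦ B (f x) * g x := by
  refine hg.bdd_mul (c := C) (hB.measurable.comp hf).aestronglyMeasurable
    (Eventually.of_forall fun u ↦ ?_)
  rw [norm_of_nonneg (hB.nonneg _)]
  exact hB.le _

lemma integrableOn_sub_one_mul {f : ℝ → ℂ} {s : Set ℝ} (hf : IntegrableOn f s) :
    IntegrableOn (fun u ↦ ((B u - 1 : ℝ) : ℂ) * f u) s := by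
  refine hf.bdd_mul (c := C + 1) ?_ (Eventually.of_forall fun u ↦ ?_)
  · exact (Complex.measurable_ofReal.comp (hB.measurable.sub_const 1)).aestronglyMeasurable
  · rw [Complex.norm_real]
    exact hB.norm_sub_one_le u

lemma integrableOn_sub_one_mul_cexp {s : ℂ} (hs : 0 < s.re) :
    IntegrableOn (fun u : ℝ ↦ ((B u - 1 : ℝ) : ℂ) * Complex.exp (-s * u)) (Ioi 0) :=
  hB.integrableOn_sub_one_mul (integrableOn_exp_mul_complex_Ioi (by simpa using hs) 0)

end IsNormalizedCounting

lemma tendsto_integral_mul_cexp_neg_mul {f : ℝ → ℂ} (hf : IntegrableOn f (Ioi 0)) :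
    Tendsto (fun d : ℝ ↦ ∫ u in Ioi (0 : ℝ), f u * Complex.exp (-d * u)) (𝓝[>] 0)
      (𝓝 (∫ u in Ioi (0 : ℝ), f u)) := by
  refine tendsto_integral_filter_of_dominated_convergence (fun u ↦ ‖f u‖) ?_ ?_ hf.norm ?_
  · exact Eventually.of_forall fun d ↦
      hf.aestronglyMeasurable.mul (Continuous.aestronglyMeasurable (by fun_prop))
  · filter_upwards [self_mem_nhdsWithin] with d hd
    filter_upwards [ae_restrict_mem measurableSet_Ioi] with u hu
    have hexp : ‖Complex.exp (-d * u)‖ ≤ 1 := by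
      rw [Complex.norm_exp]
      simpa using mul_nonneg (le_of_lt hd) (le_of_lt hu)
    rw [norm_mul]
    exact mul_le_of_le_one_right (norm_nonneg _) hexp
  · refine Eventually.of_forall fun u ↦ tendsto_nhdsWithin_of_tendsto_nhds ?_
    have hcont : Continuous fun d : ℝ ↦ f u * Complex.exp (-d * u) := by fun_prop
    simpa using hcont.tendsto 0

lemma tendsto_integral_mul_boundary {w : ℝ → ℂ} (hw : Continuous w) {G : ℂ → ℂ}
    (hG : ContinuousOn G {s | 0 ≤ s.re}) (l : ℝ) :
    Tendsto (fun d : ℝ ↦ ∫ t in Ioc (-1 : ℝ) 1, w t * G (d - Complex.I * l * t)) (𝓝[>] 0)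
      (𝓝 (∫ t in Ioc (-1 : ℝ) 1, w t * G (-(Complex.I * l * t)))) := by
  let K : Set (ℝ × ℝ) := Icc 0 1 ×ˢ Icc (-1) 1
  let F : ℝ × ℝ → ℂ := fun z ↦ w z.2 * G (z.1 - Complex.I * l * z.2)
  have hF : ContinuousOn F K := by
    refine ContinuousOn.mul (by fun_prop) (hG.comp (by fun_prop) fun z hz ↦ ?_)
    simpa using hz.1.1
  obtain ⟨M, hM⟩ := (isCompact_Icc.prod isCompact_Icc).exists_bound_of_continuousOn hF
  have hsmall : ∀ᶠ d : ℝ in 𝓝[>] 0, d ∈ Icc (0 : ℝ) 1 :=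
    mem_of_superset (Ioc_mem_nhdsGT one_pos) Ioc_subset_Icc_self
  refine tendsto_integral_filter_of_dominated_convergence (fun _ ↦ M) ?_ ?_
    (integrableOn_const (by simp)) ?_
  · filter_upwards [hsmall] with d hd
    exact (hF.comp (f := fun t ↦ (d, t)) (by fun_prop) fun t ht ↦
      ⟨hd, Ioc_subset_Icc_self ht⟩).aestronglyMeasurable measurableSet_Ioc
  · filter_upwards [hsmall] with d hd
    filter_upwards [ae_restrict_mem measurableSet_Ioc] with t ht
    exact hM (d, t) ⟨hd, Ioc_subset_Icc_self ht⟩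
  · filter_upwards [ae_restrict_mem measurableSet_Ioc] with t ht
    have hlim : Tendsto (fun d : ℝ ↦ (d, t)) (𝓝[>] 0) (𝓝[K] (0, t)) :=
      tendsto_nhdsWithin_iff.2 ⟨tendsto_nhdsWithin_of_tendsto_nhds
        (Continuous.tendsto' (by fun_prop) _ _ rfl),
        hsmall.mono fun d hd ↦ ⟨hd, Ioc_subset_Icc_self ht⟩⟩
    have hF_at := hF (0, t) ⟨by simp, Ioc_subset_Icc_self ht⟩
    simpa [F, Function.comp_def] using hF_at.tendsto.comp hlim

namespace IsNormalizedCounting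

variable {B : ℝ → ℝ} {C : ℝ} (hB : IsNormalizedCounting B C) {G : ℂ → ℂ}
  (hG : ContinuousOn G {s | 0 ≤ s.re})
  (hBG : ∀ s : ℂ, 0 < s.re →
    ∫ u in Ioi (0 : ℝ), ((B u - 1 : ℝ) : ℂ) * Complex.exp (-s * u) = G s)

include hB

lemma integrable_mul_triangle_mul_cexp {d : ℝ} (hd : 0 < d) (l y : ℝ) :
    Integrable (fun z : ℝ × ℝ ↦ (((B z.1 - 1 : ℝ) : ℂ) * Complex.exp (-d * z.1)) *
        (((1 - |z.2| : ℝ) : ℂ) * Complex.exp (Complex.I * z.2 * (l * (z.1 - y) : ℝ))))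
      ((volume.restrict (Ioi 0)).prod (volume.restrict (Ioc (-1) 1))) := by
  have htriangle : IntegrableOn (fun t : ℝ ↦ ((1 - |t| : ℝ) : ℂ)) (Ioc (-1) 1) :=
    (Continuous.integrableOn_Icc (by fun_prop)).mono_set Ioc_subset_Icc_self
  have hlaplace := hB.integrableOn_sub_one_mul_cexp (s := d) (by simpa using hd)
  refine ((hlaplace.mul_prod htriangle).mul_bdd (c := 1)
    (g := fun z : ℝ × ℝ ↦ Complex.exp (Complex.I * z.2 * (l * (z.1 - y) : ℝ)))
    (Continuous.aestronglyMeasurable (by fun_prop)) (Eventually.of_forall fun z ↦ ?_)).congr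
    (Eventually.of_forall fun z ↦ by ring)
  simp [Complex.norm_exp]

lemma integral_sub_one_mul_fejerKernel_eq_sub {l : ℝ} (hl : 0 < l) (y : ℝ) :
    ∫ u in Ioi (0 : ℝ), (B u - 1) * fejerKernel (l * (u - y))
      = l⁻¹ * (∫ x, B (y + x / l) * fejerKernel x)
        - l⁻¹ * ∫ x in Ioi (-(l * y)), fejerKernel x := by
  have hB_int : Integrable fun u ↦ B u * fejerKernel (l * (u - y)) :=
    hB.integrable_comp_mul measurable_id (integrable_fejerKernel_comp hl.ne' y)
  have hB_eq : ∫ u in Ioi (0 : ℝ), B u * fejerKernel (l * (u - y))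
      = l⁻¹ * ∫ x, B (y + x / l) * fejerKernel x := by
    have hscale := Measure.integral_comp_mul_left (fun x ↦ B (y + x / l) * fejerKernel x) l
    rw [abs_of_pos (by positivity), smul_eq_mul] at hscale
    rw [← integral_Ici_eq_integral_Ioi, setIntegral_eq_integral_of_forall_compl_eq_zero, ← hscale,
      ← integral_sub_right_eq_self (fun x ↦ B (y + l * x / l) * fejerKernel (l * x)) y]
    · congr 1 with u
      rw [mul_div_cancel_left₀ _ hl.ne', add_sub_cancel]
    · intro u hu
      rw [hB.eq_zero_of_neg u (by simpa using hu), zero_mul]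
  have hker_eq : ∫ u in Ioi (0 : ℝ), fejerKernel (l * (u - y))
      = l⁻¹ * ∫ x in Ioi (-(l * y)), fejerKernel x := by
    have hshift := (measurePreserving_sub_right volume y).setIntegral_preimage_emb
      (measurableEmbedding_subRight y) (fun x ↦ fejerKernel (l * x)) (Ioi (-y))
    rw [← mul_neg, ← smul_eq_mul, ← integral_comp_mul_left_Ioi (fun x ↦ fejerKernel x) (-y) hl,
      ← hshift]
    simp
  simp only [sub_mul, one_mul]
  rw [integral_sub hB_int.integrableOn (integrable_fejerKernel_comp hl.ne' y).integrableOn,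
    hB_eq, hker_eq]

lemma integrable_shift_mul_fejerKernel (l y : ℝ) :
    Integrable fun x ↦ B (y + x / l) * fejerKernel x :=
  hB.integrable_comp_mul (by fun_prop) integrable_fejerKernel

lemma mul_integral_Icc_le_integral_shift {l A : ℝ} (hl : 0 < l) (y : ℝ) :
    B y * exp (-(2 * (A / l))) * ∫ x in Icc (-A) A, fejerKernel x
      ≤ ∫ x, B (y + A / l + x / l) * fejerKernel x := by
  have hB_int := hB.integrable_shift_mul_fejerKernel l (y + A / l)
  rw [← integral_const_mul]
  refine le_trans (setIntegral_mono_on (integrable_fejerKernel.const_mul _).integrableOn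
    hB_int.integrableOn measurableSet_Icc fun x hx ↦ ?_) (setIntegral_le_integral hB_int
      (Eventually.of_forall fun x ↦ mul_nonneg (hB.nonneg _) (fejerKernel_nonneg _)))
  have hlower : -(A / l) ≤ x / l := by rw [← neg_div]; gcongr; exact hx.1
  have hupper : x / l ≤ A / l := by gcongr; exact hx.2
  refine mul_le_mul_of_nonneg_right ?_ (fejerKernel_nonneg _)
  rw [exp_neg, ← div_eq_mul_inv, div_le_iff₀ (exp_pos _)]
  refine (hB.le_mul_exp (v := y + A / l + x / l) (by linarith)).trans ?_
  exact mul_le_mul_of_nonneg_left (exp_le_exp.2 (by linarith)) (hB.nonneg _)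

lemma integral_shift_le_mul_integral_Icc_add {l A : ℝ} (hl : 0 < l) (y : ℝ) :
    ∫ x, B (y - A / l + x / l) * fejerKernel x
      ≤ B y * exp (2 * (A / l)) * (∫ x in Icc (-A) A, fejerKernel x)
        + C * ((∫ x, fejerKernel x) - ∫ x in Icc (-A) A, fejerKernel x) := by
  have hB_int := hB.integrable_shift_mul_fejerKernel l (y - A / l)
  have hker (c : ℝ) := integrable_fejerKernel.const_mul c
  rw [← integral_add_compl (s := Icc (-A) A) measurableSet_Icc hB_int,
    ← integral_add_compl (s := Icc (-A) A) measurableSet_Icc integrable_fejerKernel,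
    add_sub_cancel_left, ← integral_const_mul, ← integral_const_mul]
  refine add_le_add
    (setIntegral_mono_on hB_int.integrableOn (hker _).integrableOn measurableSet_Icc fun x hx ↦ ?_)
    (setIntegral_mono_on hB_int.integrableOn (hker _).integrableOn measurableSet_Icc.compl
      fun x _ ↦ mul_le_mul_of_nonneg_right (hB.le _) (fejerKernel_nonneg _))
  have hlower : -(A / l) ≤ x / l := by rw [← neg_div]; gcongr; exact hx.1
  have hupper : x / l ≤ A / l := by gcongr; exact hx.2
  refine mul_le_mul_of_nonneg_right ?_ (fejerKernel_nonneg _)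
  refine (hB.le_mul_exp (v := y) (by linarith)).trans ?_
  exact mul_le_mul_of_nonneg_left (exp_le_exp.2 (by linarith)) (hB.nonneg _)

include hBG

-- Insert the Fourier representation of the kernel and exchange the two integrals.
lemma integral_sub_one_mul_cexp_mul_fejerKernel {d : ℝ} (hd : 0 < d) {l : ℝ} (hl : l ≠ 0)
    (y : ℝ) :
    ∫ u in Ioi (0 : ℝ), ((B u - 1 : ℝ) : ℂ) * fejerKernel (l * (u - y)) * Complex.exp (-d * u)
      = ∫ t in Ioc (-1 : ℝ) 1, ((1 - |t| : ℝ) : ℂ) * Complex.exp (-(Complex.I * l * t * y))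
          * G (d - Complex.I * l * t) := by
  calc
    _ = ∫ u in Ioi (0 : ℝ), ∫ t in Ioc (-1 : ℝ) 1,
          (((B u - 1 : ℝ) : ℂ) * Complex.exp (-d * u)) *
            (((1 - |t| : ℝ) : ℂ) * Complex.exp (Complex.I * t * (l * (u - y) : ℝ))) := by
      refine integral_congr_ae (ae_restrict_of_ae ?_)
      filter_upwards [compl_mem_ae_iff.2 (measure_singleton y)] with u hu
      rw [integral_const_mul, ← intervalIntegral.integral_of_le (by norm_num),
        integral_triangle_mul_cexp (mul_ne_zero hl (sub_ne_zero.2 hu))]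
      ring
    _ = ∫ t in Ioc (-1 : ℝ) 1, ∫ u in Ioi (0 : ℝ),
          (((B u - 1 : ℝ) : ℂ) * Complex.exp (-d * u)) *
            (((1 - |t| : ℝ) : ℂ) * Complex.exp (Complex.I * t * (l * (u - y) : ℝ))) :=
      integral_integral_swap (hB.integrable_mul_triangle_mul_cexp hd l y)
    _ = _ := by
      refine setIntegral_congr_fun measurableSet_Ioc fun t _ ↦ ?_
      rw [← hBG _ (by simpa using hd), ← integral_const_mul]
      congr 1 with u
      have hexp : Complex.exp (-d * u) * Complex.exp (Complex.I * t * (l * (u - y) : ℝ))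
          = Complex.exp (-(Complex.I * l * t * y)) *
            Complex.exp (-(d - Complex.I * l * t) * u) := by
        rw [← Complex.exp_add, ← Complex.exp_add]
        congr 1
        push_cast
        ring
      linear_combination ((B u - 1 : ℝ) : ℂ) * ((1 - |t| : ℝ) : ℂ) * hexp

include hG

lemma integral_sub_one_mul_fejerKernel {l : ℝ} (hl : l ≠ 0) (y : ℝ) :
    ∫ u in Ioi (0 : ℝ), ((B u - 1 : ℝ) : ℂ) * fejerKernel (l * (u - y))
      = ∫ t in Ioc (-1 : ℝ) 1, ((1 - |t| : ℝ) : ℂ) * Complex.exp (-(Complex.I * l * t * y))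
          * G (-(Complex.I * l * t)) := by
  refine tendsto_nhds_unique (tendsto_integral_mul_cexp_neg_mul
    (hB.integrableOn_sub_one_mul (integrable_fejerKernel_comp hl y).ofReal.integrableOn))
    ((tendsto_integral_mul_boundary (by fun_prop) hG l).congr' ?_)
  filter_upwards [self_mem_nhdsWithin] with d hd
  exact (hB.integral_sub_one_mul_cexp_mul_fejerKernel hBG hd hl y).symm

-- The Riemann–Lebesgue lemma applied to the boundary values of `G`.
lemma tendsto_integral_sub_one_mul_fejerKernel {l : ℝ} (hl : 0 < l) :
    Tendsto (fun y ↦ ∫ u in Ioi (0 : ℝ), (B u - 1) * fejerKernel (l * (u - y))) atTop (𝓝 0) := by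
  have hfourier := Real.tendsto_integral_exp_smul_cocompact
    ((Ioc (-1 : ℝ) 1).indicator fun t ↦ ((1 - |t| : ℝ) : ℂ) * G (-(Complex.I * l * t)))
  have hscale : Tendsto (fun y : ℝ ↦ l * y / (2 * π)) atTop (cocompact ℝ) :=
    ((tendsto_id.const_mul_atTop hl).atTop_div_const (by positivity)).mono_right atTop_le_cocompact
  have hcomplex : Tendsto
      (fun y ↦ ∫ u in Ioi (0 : ℝ), ((B u - 1 : ℝ) : ℂ) * fejerKernel (l * (u - y)))
      atTop (𝓝 0) := by
    refine (hfourier.comp hscale).congr fun y ↦ ?_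
    rw [hB.integral_sub_one_mul_fejerKernel hG hBG hl.ne' y, ← integral_indicator measurableSet_Ioc]
    simp only [Function.comp]
    congr 1 with t
    by_cases ht : t ∈ Ioc (-1 : ℝ) 1
    · have hphase : ((2 * π * (-(t * (l * y / (2 * π)))) : ℝ) : ℂ) * Complex.I
          = -(Complex.I * l * t * y) := by
        push_cast
        field_simp
      rw [indicator_of_mem ht, indicator_of_mem ht, Circle.smul_def, Real.fourierChar_apply,
        smul_eq_mul, hphase]
      ring
    · simp [indicator_of_notMem ht]
  refine ((Complex.continuous_re.tendsto _).comp hcomplex).congr fun y ↦ ?_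
  simp only [Function.comp, ← Complex.ofReal_mul]
  rw [integral_complex_ofReal, Complex.ofReal_re]

lemma tendsto_integral_comp_mul_fejerKernel {l : ℝ} (hl : 0 < l) :
    Tendsto (fun y ↦ ∫ x, B (y + x / l) * fejerKernel x) atTop (𝓝 (∫ x, fejerKernel x)) := by
  have hbot : Tendsto (fun y : ℝ ↦ -(l * y)) atTop atBot :=
    tendsto_neg_atTop_atBot.comp (tendsto_id.const_mul_atTop hl)
  have hker : Tendsto (fun y : ℝ ↦ ∫ x in Ioi (-(l * y)), fejerKernel x) atTop
      (𝓝 (∫ x, fejerKernel x)) :=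
    (aecover_Ioi hbot).integral_tendsto_of_countably_generated integrable_fejerKernel
  have hsum := ((hB.tendsto_integral_sub_one_mul_fejerKernel hG hBG hl).const_mul l).add hker
  rw [mul_zero, zero_add] at hsum
  refine hsum.congr fun y ↦ ?_
  rw [hB.integral_sub_one_mul_fejerKernel_eq_sub hl]
  field_simp
  ring

lemma eventually_le {ε : ℝ} (hε : 0 < ε) (hε' : ε < 1) :
    ∀ᶠ y in atTop, B y ≤ (1 + ε) * exp (2 * ε) / (1 - ε) := by
  obtain ⟨A, hA, hmass⟩ := exists_integral_Icc_fejerKernel_gt hε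
  have hκ := integral_fejerKernel_pos
  set κ := ∫ x, fejerKernel x
  have hl : 0 < A / ε := div_pos hA hε
  have hconv : ∀ᶠ y in atTop, ∫ x, B (y + x / (A / ε)) * fejerKernel x < κ * (1 + ε) :=
    (hB.tendsto_integral_comp_mul_fejerKernel hG hBG hl).eventually (gt_mem_nhds (by nlinarith))
  filter_upwards [(tendsto_atTop_add_const_right atTop ε tendsto_id).eventually hconv] with y hy
  have hwindow := hB.mul_integral_Icc_le_integral_shift (A := A) hl y
  rw [div_div_cancel₀ hA.ne'] at hwindow
  have hscaled : κ * (B y * exp (-(2 * ε)) * (1 - ε)) ≤ κ * (1 + ε) := calc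
    _ = B y * exp (-(2 * ε)) * (κ * (1 - ε)) := by ring
    _ ≤ B y * exp (-(2 * ε)) * ∫ x in Icc (-A) A, fejerKernel x :=
      mul_le_mul_of_nonneg_left hmass.le (mul_nonneg (hB.nonneg y) (exp_pos _).le)
    _ ≤ κ * (1 + ε) := hwindow.trans hy.le
  have hcancel := le_of_mul_le_mul_left hscaled hκ
  rw [exp_neg, mul_right_comm, ← div_eq_mul_inv, div_le_iff₀ (exp_pos _)] at hcancel
  rwa [le_div_iff₀ (by linarith)]

lemma eventually_ge {ε : ℝ} (hε : 0 < ε) :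
    ∀ᶠ y in atTop, (1 - ε - C * ε) * exp (-(2 * ε)) ≤ B y := by
  obtain ⟨A, hA, hmass⟩ := exists_integral_Icc_fejerKernel_gt hε
  have hκ := integral_fejerKernel_pos
  have hmass_le : ∫ x in Icc (-A) A, fejerKernel x ≤ ∫ x, fejerKernel x :=
    setIntegral_le_integral integrable_fejerKernel (Eventually.of_forall fejerKernel_nonneg)
  set κ := ∫ x, fejerKernel x
  have hl : 0 < A / ε := div_pos hA hε
  have hC : 0 ≤ C := (hB.nonneg 0).trans (hB.le 0)
  have hconv : ∀ᶠ y in atTop, κ * (1 - ε) < ∫ x, B (y + x / (A / ε)) * fejerKernel x :=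
    (hB.tendsto_integral_comp_mul_fejerKernel hG hBG hl).eventually (lt_mem_nhds (by nlinarith))
  filter_upwards [(tendsto_atTop_add_const_right atTop (-ε) tendsto_id).eventually hconv] with y hy
  have hwindow := hB.integral_shift_le_mul_integral_Icc_add (A := A) hl y
  rw [div_div_cancel₀ hA.ne', sub_eq_add_neg y] at hwindow
  have hscaled : κ * (1 - ε) ≤ κ * (B y * exp (2 * ε) + C * ε) := calc
    _ ≤ B y * exp (2 * ε) * (∫ x in Icc (-A) A, fejerKernel x)
        + C * (κ - ∫ x in Icc (-A) A, fejerKernel x) := hy.le.trans hwindow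
    _ ≤ B y * exp (2 * ε) * κ + C * (κ * ε) := add_le_add
      (mul_le_mul_of_nonneg_left hmass_le (mul_nonneg (hB.nonneg y) (exp_pos _).le))
      (mul_le_mul_of_nonneg_left (by linarith) hC)
    _ = _ := by ring
  have hcancel := le_of_mul_le_mul_left hscaled hκ
  rw [exp_neg, ← div_eq_mul_inv, div_le_iff₀ (exp_pos _)]
  linarith

theorem tendsto_one : Tendsto B atTop (𝓝 1) := by
  have hpos : ∀ᶠ ε : ℝ in 𝓝[>] 0, 0 < ε := self_mem_nhdsWithin
  have hlt_one : ∀ᶠ ε : ℝ in 𝓝[>] 0, ε < 1 := nhdsWithin_le_nhds (gt_mem_nhds one_pos)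
  refine tendsto_order.2 ⟨fun a ha ↦ ?_, fun a ha ↦ ?_⟩
  · have hlower : Tendsto (fun ε : ℝ ↦ (1 - ε - C * ε) * exp (-(2 * ε))) (𝓝[>] 0) (𝓝 1) :=
      tendsto_nhdsWithin_of_tendsto_nhds (Continuous.tendsto' (by fun_prop) _ _ (by simp))
    obtain ⟨ε, hε, hεa⟩ := (hpos.and (hlower.eventually (lt_mem_nhds ha))).exists
    exact (hB.eventually_ge hG hBG hε).mono fun y hy ↦ hεa.trans_le hy
  · have hupper : Tendsto (fun ε : ℝ ↦ (1 + ε) * exp (2 * ε) / (1 - ε)) (𝓝[>] 0) (𝓝 1) := by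
      have hcont : ContinuousAt (fun ε : ℝ ↦ (1 + ε) * exp (2 * ε) / (1 - ε)) 0 :=
        ContinuousAt.div (by fun_prop) (by fun_prop) (by norm_num)
      exact tendsto_nhdsWithin_of_tendsto_nhds (by simpa using hcont.tendsto)
    obtain ⟨ε, ⟨hε, hε'⟩, hεa⟩ :=
      ((hpos.and hlt_one).and (hupper.eventually (gt_mem_nhds ha))).exists
    exact (hB.eventually_le hG hBG hε hε').mono fun y hy ↦ hy.trans_lt hεa

end IsNormalizedCounting

/-! ### The prime number theorem -/

open Chebyshev (psi theta)
open ArithmeticFunction (vonMangoldt)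

lemma isNormalizedCounting_psi :
    IsNormalizedCounting (fun u ↦ psi (exp u) / exp u) (log 4 + 4) where
  nonneg u := div_nonneg (Chebyshev.psi_nonneg _) (exp_pos u).le
  le u := (div_le_iff₀ (exp_pos u)).2 (Chebyshev.psi_le_const_mul_self (exp_pos u).le)
  eq_zero_of_neg u hu := by
    rw [Chebyshev.psi_eq_zero_of_le_one (exp_le_one_iff.2 hu.le), zero_div]
  monotone_mul_exp u v huv := by
    simpa only [div_mul_cancel₀ _ (exp_pos _).ne'] using
      Chebyshev.psi_mono (exp_le_exp.2 huv)

lemma isBigO_sum_vonMangoldt :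
    (fun n : ℕ ↦ ∑ k ∈ Finset.Icc 1 n, vonMangoldt k) =O[atTop] fun n ↦ (n : ℝ) ^ (1 : ℝ) := by
  refine Asymptotics.IsBigO.of_bound (log 4 + 4) (Eventually.of_forall fun n ↦ ?_)
  have hpsi : ∑ k ∈ Finset.Icc 1 n, vonMangoldt k = psi n := by
    simp [Chebyshev.psi, ← Finset.Icc_succ_left_eq_Ioc]
  rw [hpsi, rpow_one, norm_of_nonneg (Chebyshev.psi_nonneg _), norm_of_nonneg n.cast_nonneg]
  exact Chebyshev.psi_le_const_mul_self n.cast_nonneg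

lemma LSeries_vonMangoldt_eq_mul_integral {s : ℂ} (hs : 1 < s.re) :
    LSeries (fun n ↦ ((vonMangoldt n : ℝ) : ℂ)) s
      = s * ∫ u in Ioi (0 : ℝ), ((psi (exp u) / exp u : ℝ) : ℂ) * Complex.exp (-(s - 1) * u) := by
  rw [LSeries_eq_mul_integral_of_nonneg (fun n ↦ vonMangoldt n) zero_le_one hs
    isBigO_sum_vonMangoldt (fun n ↦ ArithmeticFunction.vonMangoldt_nonneg), ← exp_zero,
    ← integral_comp_exp_Ioi]
  congr 1
  refine setIntegral_congr_fun measurableSet_Ioi fun u _ ↦ ?_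
  have hcpow : ((exp u : ℝ) : ℂ) ^ (-(s + 1)) = Complex.exp (-(s + 1) * u) := by
    rw [Complex.cpow_def_of_ne_zero (by exact_mod_cast (exp_pos u).ne'),
      ← Complex.ofReal_log (exp_pos u).le, log_exp, mul_comm]
  have hsplit : Complex.exp (-(s - 1) * u)
      = Complex.exp u * Complex.exp (-(s + 1) * u) * Complex.exp u := by
    rw [← Complex.exp_add, ← Complex.exp_add]
    congr 1
    ring
  have hpsi : ∑ k ∈ Finset.Icc 1 ⌊exp u⌋₊, ((vonMangoldt k : ℝ) : ℂ) = (psi (exp u) : ℂ) := by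
    rw [← Complex.ofReal_sum]
    simp [Chebyshev.psi, ← Finset.Icc_succ_left_eq_Ioc]
  rw [hpsi, hcpow, hsplit, Complex.real_smul]
  push_cast
  field_simp

/-- The continuous extension to `0 ≤ re s` of the Laplace transform of
`u ↦ psi (exp u) / exp u - 1`. Mathlib's auxiliary function `LFunctionResidueClassAux` for the
modulus `1` is `-ζ' / ζ` with the pole at `1` removed, and `s` is shifted by `1`. -/
noncomputable def psiLaplace (s : ℂ) : ℂ :=
  (vonMangoldt.LFunctionResidueClassAux (1 : ZMod 1) (s + 1) - 1) / (s + 1)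

lemma continuousOn_psiLaplace : ContinuousOn psiLaplace {s | 0 ≤ s.re} := by
  refine ContinuousOn.div (ContinuousOn.sub ?_ continuousOn_const) (by fun_prop) fun s hs h ↦ ?_
  · exact (vonMangoldt.continuousOn_LFunctionResidueClassAux _).comp (by fun_prop)
      fun s hs ↦ by simpa using hs
  · have hre : s.re + 1 = 0 := by simpa using congrArg Complex.re h
    linarith [show 0 ≤ s.re from hs]

lemma vonMangoldt_residueClass_mod_one :
    (fun n ↦ ((vonMangoldt.residueClass (1 : ZMod 1) n : ℝ) : ℂ))
      = fun n ↦ ((vonMangoldt n : ℝ) : ℂ) := by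
  ext n
  congr 1
  exact indicator_of_mem (show n ∈ {k : ℕ | (k : ZMod 1) = 1} from Subsingleton.elim _ _) _

lemma integral_psi_sub_one_mul_cexp {s : ℂ} (hs : 0 < s.re) :
    ∫ u in Ioi (0 : ℝ), ((psi (exp u) / exp u - 1 : ℝ) : ℂ) * Complex.exp (-s * u)
      = psiLaplace s := by
  have hs_one : 1 < (s + 1).re := by simpa using hs
  have hs_ne : s ≠ 0 := by rintro rfl; simp at hs
  have hs_one_ne : s + 1 ≠ 0 := fun h ↦ by
    rw [h, Complex.zero_re] at hs_one
    linarith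
  have haux := vonMangoldt.eqOn_LFunctionResidueClassAux (q := 1) (a := 1) isUnit_one
    (show s + 1 ∈ {s : ℂ | 1 < s.re} from hs_one)
  simp only [vonMangoldt_residueClass_mod_one, Nat.totient_one,
    LSeries_vonMangoldt_eq_mul_integral hs_one, add_sub_cancel_right] at haux
  have hexp_int : IntegrableOn (fun u : ℝ ↦ Complex.exp (-s * u)) (Ioi 0) :=
    integrableOn_exp_mul_complex_Ioi (by simpa using hs) 0
  have hpsi_int : IntegrableOn (fun u : ℝ ↦
      ((psi (exp u) / exp u : ℝ) : ℂ) * Complex.exp (-s * u)) (Ioi 0) := by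
    refine ((isNormalizedCounting_psi.integrableOn_sub_one_mul_cexp hs).add hexp_int).congr
      (Eventually.of_forall fun u ↦ ?_)
    simp only [Pi.add_apply]
    push_cast
    ring
  have hexp_integral : ∫ u in Ioi (0 : ℝ), Complex.exp (-s * u) = 1 / s := by
    rw [integral_exp_mul_complex_Ioi (by simpa using hs)]
    simp
  simp only [Complex.ofReal_sub, Complex.ofReal_one, sub_mul, one_mul]
  rw [integral_sub hpsi_int hexp_int, hexp_integral, psiLaplace, haux]
  simp
  field_simp
  ring

theorem tendsto_psi_div_self : Tendsto (fun x ↦ psi x / x) atTop (𝓝 1) := by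
  refine ((isNormalizedCounting_psi.tendsto_one continuousOn_psiLaplace
    fun s ↦ integral_psi_sub_one_mul_cexp).comp tendsto_log_atTop).congr' ?_
  filter_upwards [eventually_gt_atTop 0] with x hx
  simp only [Function.comp, exp_log hx]

theorem tendsto_theta_div_self : Tendsto (fun x ↦ theta x / x) atTop (𝓝 1) := by
  obtain ⟨C, hC⟩ := Chebyshev.psi_sub_theta_le_mul_sqrt
  have hlower : Tendsto (fun x : ℝ ↦ psi x / x - C / √x) atTop (𝓝 1) := by
    simpa using tendsto_psi_div_self.sub
      ((tendsto_const_nhds (x := C)).div_atTop tendsto_sqrt_atTop)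
  refine tendsto_of_tendsto_of_tendsto_of_le_of_le' hlower tendsto_psi_div_self ?_ ?_
  · filter_upwards [eventually_gt_atTop 0] with x hx
    rw [div_eq_mul_inv C, ← sqrt_div_self, ← mul_div_assoc, ← sub_div]
    gcongr
    linarith [hC x]
  · filter_upwards [eventually_gt_atTop 0] with x hx
    gcongr
    exact Chebyshev.theta_le_psi x

/-! ### Contour integrals in a strip -/

section SegmentIntegral

open AffineMap (lineMap)

/-- The integral of `f` along the straight segment from `a` to `b`. -/
noncomputable def segmentIntegral (f : ℂ → ℂ) (a b : ℂ) : ℂ :=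
  ∫ t in (0 : ℝ)..1, f (lineMap a b t) * (b - a)

variable {S : Set ℂ} {f g F : ℂ → ℂ} {a b : ℂ}

lemma lineMap_mem_of_convex (hS : Convex ℝ S) (ha : a ∈ S) (hb : b ∈ S) {t : ℝ}
    (ht : t ∈ uIcc (0 : ℝ) 1) : lineMap a b t ∈ S := by
  rw [uIcc_of_le zero_le_one] at ht
  exact hS.lineMap_mem ha hb ht

lemma intervalIntegrable_segment (hS : Convex ℝ S) (ha : a ∈ S) (hb : b ∈ S)
    (hf : ContinuousOn f S) :
    IntervalIntegrable (fun t : ℝ ↦ f (lineMap a b t) * (b - a)) volume 0 1 :=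
  ((hf.comp AffineMap.lineMap_continuous.continuousOn
    fun _ ht ↦ lineMap_mem_of_convex hS ha hb ht).mul_const _).intervalIntegrable

lemma segmentIntegral_add (hS : Convex ℝ S) (ha : a ∈ S) (hb : b ∈ S)
    (hf : ContinuousOn f S) (hg : ContinuousOn g S) :
    segmentIntegral (fun v ↦ f v + g v) a b = segmentIntegral f a b + segmentIntegral g a b := by
  simp only [segmentIntegral, add_mul]
  exact intervalIntegral.integral_add (intervalIntegrable_segment hS ha hb hf)
    (intervalIntegrable_segment hS ha hb hg)

lemma segmentIntegral_const_mul (c : ℂ) :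
    segmentIntegral (fun v ↦ c * f v) a b = c * segmentIntegral f a b := by
  simp only [segmentIntegral, mul_assoc, intervalIntegral.integral_const_mul]

lemma segmentIntegral_congr (hS : Convex ℝ S) (ha : a ∈ S) (hb : b ∈ S) (hfg : EqOn f g S) :
    segmentIntegral f a b = segmentIntegral g a b :=
  intervalIntegral.integral_congr fun _ ht ↦ by
    simp only [hfg (lineMap_mem_of_convex hS ha hb ht)]

lemma segmentIntegral_eq_sub (hS : Convex ℝ S) (ha : a ∈ S) (hb : b ∈ S) (hf : ContinuousOn f S)
    (hF : ∀ z ∈ S, HasDerivAt F (f z) z) : segmentIntegral f a b = F b - F a := by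
  have hderiv : ∀ t ∈ uIcc (0 : ℝ) 1,
      HasDerivAt (fun t : ℝ ↦ F (lineMap a b t)) (f (lineMap a b t) * (b - a)) t := fun t ht ↦
    (hF _ (lineMap_mem_of_convex hS ha hb ht)).comp t AffineMap.hasDerivAt_lineMap
  simpa [segmentIntegral] using intervalIntegral.integral_eq_sub_of_hasDerivAt hderiv
    (intervalIntegrable_segment hS ha hb hf)

lemma norm_segmentIntegral_le {M : ℝ} (hf : ∀ t ∈ Icc (0 : ℝ) 1, ‖f (lineMap a b t)‖ ≤ M) :
    ‖segmentIntegral f a b‖ ≤ M * ‖b - a‖ := by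
  have hbound : ∀ t ∈ uIoc (0 : ℝ) 1, ‖f (lineMap a b t) * (b - a)‖ ≤ M * ‖b - a‖ := fun t ht ↦ by
    rw [uIoc_of_le zero_le_one] at ht
    rw [norm_mul]
    exact mul_le_mul_of_nonneg_right (hf t (Ioc_subset_Icc_self ht)) (norm_nonneg _)
  simpa [segmentIntegral] using intervalIntegral.norm_integral_le_of_norm_le_const hbound

end SegmentIntegral

/-- The strip `0 < re z < 1`, on which `z` and `1 - z` have principal logarithms. -/
def unitStrip : Set ℂ := Complex.re ⁻¹' Ioo 0 1

lemma convex_unitStrip : Convex ℝ unitStrip :=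
  (convex_Ioo 0 1).linear_preimage Complex.reLm

lemma ne_zero_of_mem_unitStrip {z : ℂ} (hz : z ∈ unitStrip) : z ≠ 0 :=
  fun h ↦ hz.1.ne' (by simp [h])

lemma one_sub_ne_zero_of_mem_unitStrip {z : ℂ} (hz : z ∈ unitStrip) : 1 - z ≠ 0 :=
  fun h ↦ hz.2.ne (by simp [← sub_eq_zero.1 h])

lemma mul_one_sub_ne_zero_of_mem_unitStrip {z : ℂ} (hz : z ∈ unitStrip) : z * (1 - z) ≠ 0 :=
  mul_ne_zero (ne_zero_of_mem_unitStrip hz) (one_sub_ne_zero_of_mem_unitStrip hz)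

/-- The corner of the contour, placed so that the integrands below stay small on both segments. -/
noncomputable def corner : ℂ := 1 / 2 + Complex.I / 10

/-- The end of the contour, a root of `25 y² - 14 y + 2` in the variable `y = v (1 - v)`. -/
noncomputable def endpoint : ℂ := (2 + Complex.I) / 5

lemma half_mem_unitStrip : (1 / 2 : ℂ) ∈ unitStrip := by norm_num [unitStrip]

lemma corner_mem_unitStrip : corner ∈ unitStrip := by norm_num [unitStrip, corner]

lemma endpoint_mem_unitStrip : endpoint ∈ unitStrip := by norm_num [unitStrip, endpoint]

/-- The integral of `f` along the broken line `1 / 2`, `corner`, `endpoint`. -/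
noncomputable def contourIntegral (f : ℂ → ℂ) : ℂ :=
  segmentIntegral f (1 / 2) corner + segmentIntegral f corner endpoint

/-- Twice the imaginary part of the contour integral of `f`: for `f` real on the real axis, this is
`-i` times the integral of `f` from the conjugate of `endpoint` to `endpoint`. -/
noncomputable def contourPeriod (f : ℂ → ℂ) : ℝ := 2 * (contourIntegral f).im

section ContourIntegral

variable {f g F : ℂ → ℂ}

lemma contourIntegral_add (hf : ContinuousOn f unitStrip) (hg : ContinuousOn g unitStrip) :
    contourIntegral (fun v ↦ f v + g v) = contourIntegral f + contourIntegral g := by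
  unfold contourIntegral
  rw [segmentIntegral_add convex_unitStrip half_mem_unitStrip corner_mem_unitStrip hf hg,
    segmentIntegral_add convex_unitStrip corner_mem_unitStrip endpoint_mem_unitStrip hf hg]
  ring

lemma contourIntegral_const_mul (c : ℂ) :
    contourIntegral (fun v ↦ c * f v) = c * contourIntegral f := by
  simp only [contourIntegral, segmentIntegral_const_mul, mul_add]

lemma contourIntegral_congr (hfg : EqOn f g unitStrip) :
    contourIntegral f = contourIntegral g := by
  unfold contourIntegral
  rw [segmentIntegral_congr convex_unitStrip half_mem_unitStrip corner_mem_unitStrip hfg,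
    segmentIntegral_congr convex_unitStrip corner_mem_unitStrip endpoint_mem_unitStrip hfg]

lemma contourIntegral_eq_sub (hf : ContinuousOn f unitStrip)
    (hF : ∀ z ∈ unitStrip, HasDerivAt F (f z) z) :
    contourIntegral f = F endpoint - F (1 / 2) := by
  unfold contourIntegral
  rw [segmentIntegral_eq_sub convex_unitStrip half_mem_unitStrip corner_mem_unitStrip hf hF,
    segmentIntegral_eq_sub convex_unitStrip corner_mem_unitStrip endpoint_mem_unitStrip hf hF]
  ring

lemma contourPeriod_add (hf : ContinuousOn f unitStrip) (hg : ContinuousOn g unitStrip) :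
    contourPeriod (fun v ↦ f v + g v) = contourPeriod f + contourPeriod g := by
  unfold contourPeriod
  rw [contourIntegral_add hf hg, Complex.add_im, mul_add]

lemma contourPeriod_const_mul (c : ℝ) :
    contourPeriod (fun v ↦ c * f v) = c * contourPeriod f := by
  unfold contourPeriod
  rw [contourIntegral_const_mul, Complex.im_ofReal_mul, mul_left_comm]

lemma contourPeriod_congr (hfg : EqOn f g unitStrip) : contourPeriod f = contourPeriod g := by
  unfold contourPeriod
  rw [contourIntegral_congr hfg]

lemma contourPeriod_eq_sub (hf : ContinuousOn f unitStrip)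
    (hF : ∀ z ∈ unitStrip, HasDerivAt F (f z) z) :
    contourPeriod f = 2 * ((F endpoint).im - (F (1 / 2)).im) := by
  unfold contourPeriod
  rw [contourIntegral_eq_sub hf hF, Complex.sub_im]

end ContourIntegral

/-! ### The moments of `v ^ i * (1 - v) ^ l` -/

/-- The period of `v ^ i * (1 - v) ^ l` along the contour. -/
noncomputable def moment (i l : ℤ) : ℝ := contourPeriod fun v ↦ v ^ i * (1 - v) ^ l

lemma continuousOn_zpow_mul_zpow (i l : ℤ) :
    ContinuousOn (fun v : ℂ ↦ v ^ i * (1 - v) ^ l) unitStrip :=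
  (continuousOn_id.zpow₀ _ fun _ hz ↦ Or.inl (ne_zero_of_mem_unitStrip hz)).mul
    ((continuousOn_const.sub continuousOn_id).zpow₀ _
      fun _ hz ↦ Or.inl (one_sub_ne_zero_of_mem_unitStrip hz))

lemma moment_eq_add (i l : ℤ) : moment i l = moment (i + 1) l + moment i (l + 1) := by
  unfold moment
  rw [← contourPeriod_add (continuousOn_zpow_mul_zpow _ _) (continuousOn_zpow_mul_zpow _ _)]
  refine contourPeriod_congr fun z hz ↦ ?_
  simp only [zpow_add_one₀ (ne_zero_of_mem_unitStrip hz),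
    zpow_add_one₀ (one_sub_ne_zero_of_mem_unitStrip hz)]
  ring

lemma im_half_zpow (m : ℤ) : ((1 / 2 : ℂ) ^ m).im = 0 := by
  have hreal : (1 / 2 : ℂ) ^ m = (((1 / 2 : ℝ) ^ m : ℝ) : ℂ) := by push_cast; rfl
  rw [hreal, Complex.ofReal_im]

lemma hasDerivAt_one_sub (z : ℂ) : HasDerivAt (fun v : ℂ ↦ 1 - v) (-1) z :=
  (hasDerivAt_id z).const_sub 1

lemma moment_zero_right_mul {m : ℤ} (hm : m + 1 ≠ 0) :
    moment m 0 * (m + 1) = 2 * (endpoint ^ (m + 1)).im := by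
  have hmC : (m : ℂ) + 1 ≠ 0 := mod_cast hm
  have hmR : (m : ℝ) + 1 ≠ 0 := mod_cast hm
  have hderiv : ∀ z ∈ unitStrip, HasDerivAt (fun v : ℂ ↦ v ^ (m + 1) / ((m + 1 : ℝ) : ℂ))
      (z ^ m * (1 - z) ^ (0 : ℤ)) z := fun z hz ↦ by
    refine ((hasDerivAt_zpow (m + 1) z (Or.inl (ne_zero_of_mem_unitStrip hz))).div_const
      _).congr_deriv ?_
    push_cast
    rw [add_sub_cancel_right, zpow_zero]
    field_simp
  rw [moment, contourPeriod_eq_sub (continuousOn_zpow_mul_zpow _ _) hderiv, Complex.div_ofReal_im,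
    Complex.div_ofReal_im, im_half_zpow]
  field_simp
  ring

lemma moment_zero_left_mul {m : ℤ} (hm : m + 1 ≠ 0) :
    moment 0 m * (m + 1) = -2 * ((1 - endpoint) ^ (m + 1)).im := by
  have hmC : (m : ℂ) + 1 ≠ 0 := mod_cast hm
  have hmR : (m : ℝ) + 1 ≠ 0 := mod_cast hm
  have hderiv : ∀ z ∈ unitStrip, HasDerivAt (fun v : ℂ ↦ -((1 - v) ^ (m + 1) / ((m + 1 : ℝ) : ℂ)))
      (z ^ (0 : ℤ) * (1 - z) ^ m) z := fun z hz ↦ by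
    refine ((((hasDerivAt_zpow (m + 1) (1 - z)
      (Or.inl (one_sub_ne_zero_of_mem_unitStrip hz))).comp z (hasDerivAt_one_sub z)).div_const
      _).neg).congr_deriv ?_
    push_cast
    rw [add_sub_cancel_right, zpow_zero]
    field_simp
  rw [moment, contourPeriod_eq_sub (continuousOn_zpow_mul_zpow _ _) hderiv, Complex.neg_im,
    Complex.neg_im, Complex.div_ofReal_im, Complex.div_ofReal_im,
    show (1 - 1 / 2 : ℂ) = 1 / 2 by norm_num, im_half_zpow]
  field_simp
  ring

lemma log_im_eq_arctan {z : ℂ} (hz : 0 < z.re) : (Complex.log z).im = arctan (z.im / z.re) := by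
  have harg := abs_lt.1 (Complex.abs_arg_lt_pi_div_two_iff.2 (Or.inl hz))
  rw [Complex.log_im, ← Complex.tan_arg, arctan_tan harg.1 harg.2]

lemma hasDerivAt_log_sub_log_one_sub {z : ℂ} (hz : z ∈ unitStrip) :
    HasDerivAt (fun v ↦ Complex.log v - Complex.log (1 - v))
      (z ^ (-1 : ℤ) * (1 - z) ^ (0 : ℤ) + z ^ (0 : ℤ) * (1 - z) ^ (-1 : ℤ)) z := by
  have hslit : 1 - z ∈ Complex.slitPlane := Or.inl (by simpa using hz.2)
  refine ((Complex.hasDerivAt_log (Or.inl hz.1)).sub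
    ((hasDerivAt_one_sub z).clog hslit)).congr_deriv ?_
  simp [neg_div]

/-- This is Euler's formula `arctan (1 / 2) + arctan (1 / 3) = π / 4`: the two arctangents are the
arguments of `endpoint` and of the conjugate of `1 - endpoint`. -/
lemma moment_neg_one_zero_add_moment_zero_neg_one : moment (-1) 0 + moment 0 (-1) = π / 2 := by
  have hcont : ContinuousOn (fun v : ℂ ↦ v ^ (-1 : ℤ) * (1 - v) ^ (0 : ℤ)
      + v ^ (0 : ℤ) * (1 - v) ^ (-1 : ℤ)) unitStrip :=
    (continuousOn_zpow_mul_zpow _ _).add (continuousOn_zpow_mul_zpow _ _)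
  have hend : endpoint.im / endpoint.re = 2⁻¹ := by norm_num [endpoint]
  have hend' : (1 - endpoint).im / (1 - endpoint).re = -3⁻¹ := by norm_num [endpoint]
  have heuler : arctan 2⁻¹ + arctan 3⁻¹ = π / 4 := arctan_inv_2_add_arctan_inv_3
  rw [moment, moment,
    ← contourPeriod_add (continuousOn_zpow_mul_zpow _ _) (continuousOn_zpow_mul_zpow _ _),
    contourPeriod_eq_sub hcont fun z hz ↦ hasDerivAt_log_sub_log_one_sub hz, Complex.sub_im,
    Complex.sub_im, log_im_eq_arctan (by norm_num [endpoint]),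
    log_im_eq_arctan (by norm_num [endpoint]), log_im_eq_arctan (by norm_num),
    log_im_eq_arctan (by norm_num), hend, hend', arctan_neg]
  norm_num
  linarith

/-! ### Denominators of the moments -/

lemma exists_gaussianInt_pow (c d : ℤ) (m : ℕ) :
    ∃ a b : ℤ, ((c : ℂ) + d * Complex.I) ^ m = a + b * Complex.I := by
  induction m with
  | zero => exact ⟨1, 0, by simp⟩
  | succ m ih =>
    obtain ⟨a, b, h⟩ := ih
    refine ⟨a * c - b * d, a * d + b * c, ?_⟩
    rw [pow_succ, h]
    push_cast
    linear_combination (b * d : ℂ) * Complex.I_sq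

lemma exists_three_add_mul_I_pow {s : ℤ} (hs : s ^ 2 = 1) (e : ℕ) :
    ∃ a b : ℤ, ((3 : ℂ) + s * Complex.I) ^ e = 2 ^ (e / 2) * (a + b * Complex.I) := by
  have hs_cast : (s : ℂ) ^ 2 = 1 := mod_cast hs
  have hsq : ((3 : ℂ) + s * Complex.I) ^ 2 = 2 * ((4 : ℤ) + (3 * s : ℤ) * Complex.I) := by
    push_cast
    linear_combination (s : ℂ) ^ 2 * Complex.I_sq - hs_cast
  obtain ⟨a, b, hpow⟩ := exists_gaussianInt_pow 4 (3 * s) (e / 2)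
  obtain heven | hodd := Nat.mod_two_eq_zero_or_one e
  · refine ⟨a, b, ?_⟩
    rw [← hpow, ← mul_pow, ← hsq, ← pow_mul]
    congr 1
    omega
  · refine ⟨3 * a - s * b, 3 * b + s * a, ?_⟩
    rw [show e = 2 * (e / 2) + 1 by omega, pow_succ, pow_mul, hsq, mul_pow, hpow,
      show (2 * (e / 2) + 1) / 2 = e / 2 by omega]
    push_cast
    linear_combination (2 ^ (e / 2) * b * s : ℂ) * Complex.I_sq

lemma im_int_add_int_mul_I (a b : ℤ) : ((a : ℂ) + b * Complex.I).im = b := by simp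

lemma exists_im_one_sub_endpoint_pow (m : ℕ) :
    ∃ b : ℤ, ((1 - endpoint) ^ m).im * 5 ^ m = 2 ^ (m / 2) * b := by
  obtain ⟨a, b, hpow⟩ := exists_three_add_mul_I_pow (s := -1) (by norm_num) m
  have hend : 1 - endpoint = (3 + (-1 : ℤ) * Complex.I) / 5 := by
    unfold endpoint
    push_cast
    ring
  have hreal : (1 - endpoint) ^ m = ((2 ^ (m / 2) / 5 ^ m : ℝ) : ℂ) * (a + b * Complex.I) := by
    rw [hend, div_pow, hpow]
    push_cast
    ring
  refine ⟨b, ?_⟩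
  rw [hreal, Complex.im_ofReal_mul, im_int_add_int_mul_I]
  field_simp

lemma exists_im_one_sub_endpoint_inv_pow (m : ℕ) :
    ∃ b : ℤ, ((1 - endpoint)⁻¹ ^ m).im * 2 ^ m = 2 ^ (m / 2) * b := by
  obtain ⟨a, b, hpow⟩ := exists_three_add_mul_I_pow (s := 1) (by norm_num) m
  have hend : (1 - endpoint)⁻¹ = (3 + (1 : ℤ) * Complex.I) / 2 := by
    apply inv_eq_of_mul_eq_one_left
    unfold endpoint
    push_cast
    linear_combination (-1 / 10 : ℂ) * Complex.I_sq
  have hreal : (1 - endpoint)⁻¹ ^ m = ((2 ^ (m / 2) / 2 ^ m : ℝ) : ℂ) * (a + b * Complex.I) := by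
    rw [hend, div_pow, hpow]
    push_cast
    ring
  refine ⟨b, ?_⟩
  rw [hreal, Complex.im_ofReal_mul, im_int_add_int_mul_I]
  field_simp

lemma exists_im_endpoint_inv_pow (m : ℕ) : ∃ b : ℤ, (endpoint⁻¹ ^ m).im = b := by
  obtain ⟨a, b, hpow⟩ := exists_gaussianInt_pow 2 (-1) m
  have hend : endpoint⁻¹ = (2 : ℤ) + (-1 : ℤ) * Complex.I := by
    apply inv_eq_of_mul_eq_one_left
    unfold endpoint
    push_cast
    linear_combination (-1 / 5 : ℂ) * Complex.I_sq
  exact ⟨b, by rw [hend, hpow, im_int_add_int_mul_I]⟩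

lemma dvd_lcmUpto {k B : ℕ} (hk : 1 ≤ k) (hB : k ≤ B) : k ∣ lcmUpto B :=
  Finset.dvd_lcm (f := id) (Finset.mem_Icc.2 ⟨hk, hB⟩)

lemma lcmUpto_dvd_lcmUpto {A B : ℕ} (h : A ≤ B) : lcmUpto A ∣ lcmUpto B :=
  Finset.lcm_mono (Finset.Icc_subset_Icc_right h)

lemma exists_lcmUpto_mul_moment_zero_left {l B : ℕ} (hB : l + 1 ≤ B) :
    ∃ z : ℤ, (lcmUpto B : ℝ) * 5 ^ (l + 1) * moment 0 l = 2 ^ ((l + 1) / 2) * z := by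
  obtain ⟨w, hw⟩ := dvd_lcmUpto (k := l + 1) (by omega) hB
  obtain ⟨b, him⟩ := exists_im_one_sub_endpoint_pow (l + 1)
  have hmoment := moment_zero_left_mul (m := l) (by omega)
  rw [← Nat.cast_succ, zpow_natCast, Nat.succ_eq_add_one] at hmoment
  refine ⟨-2 * w * b, ?_⟩
  rw [hw]
  push_cast at hmoment ⊢
  linear_combination (w * 5 ^ (l + 1) : ℝ) * hmoment - 2 * w * him

lemma exists_lcmUpto_mul_moment {i l B : ℕ} (hB : i + l + 1 ≤ B) :
    ∃ z : ℤ, (lcmUpto B : ℝ) * 5 ^ (i + l + 1) * moment i l = 2 ^ ((l + 1) / 2) * z := by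
  induction i generalizing l with
  | zero => simpa using exists_lcmUpto_mul_moment_zero_left (by omega)
  | succ i ih =>
    obtain ⟨z₁, h₁⟩ := ih (l := l) (by omega)
    obtain ⟨z₂, h₂⟩ := ih (l := l + 1) (by omega)
    have hrec := moment_eq_add i l
    have htwo : (2 : ℝ) ^ ((l + 1 + 1) / 2) =
        2 ^ ((l + 1) / 2) * 2 ^ ((l + 1 + 1) / 2 - (l + 1) / 2) := by
      rw [← pow_add]
      congr 1
      omega
    rw [htwo, show i + (l + 1) + 1 = i + l + 1 + 1 by ring, pow_succ] at h₂
    refine ⟨5 * z₁ - 2 ^ ((l + 1 + 1) / 2 - (l + 1) / 2) * z₂, ?_⟩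
    push_cast at *
    rw [show i + 1 + l + 1 = i + l + 1 + 1 by ring, pow_succ]
    linear_combination (-(lcmUpto B * 5 ^ (i + l + 1) * 5 : ℝ)) * hrec + 5 * h₁ - h₂

/-- The moment with exponents `-i` and `-l`, symmetrized under `v ↦ 1 - v`. The symmetrization is
what turns the two logarithms at the end of the recursion into a multiple of `π`. -/
noncomputable def symmMoment (i l : ℕ) : ℝ := moment (-i) (-l) + moment (-l) (-i)

lemma symmMoment_comm (i l : ℕ) : symmMoment i l = symmMoment l i := add_comm _ _

lemma symmMoment_one_zero : symmMoment 1 0 = π / 2 := by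
  simpa [symmMoment] using moment_neg_one_zero_add_moment_zero_neg_one

lemma symmMoment_succ_succ (i l : ℕ) :
    symmMoment (i + 1) (l + 1) = symmMoment i (l + 1) + symmMoment (i + 1) l := by
  have hcast (n : ℕ) : -((n + 1 : ℕ) : ℤ) + 1 = -n := by push_cast; ring
  have h₁ := moment_eq_add (-(i + 1 : ℕ)) (-(l + 1 : ℕ))
  have h₂ := moment_eq_add (-(l + 1 : ℕ)) (-(i + 1 : ℕ))
  rw [hcast, hcast] at h₁ h₂
  unfold symmMoment
  linarith

lemma mul_symmMoment_succ_zero {e : ℕ} (he : 1 ≤ e) :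
    e * symmMoment (e + 1) 0 =
      2 * ((1 - endpoint)⁻¹ ^ e).im - 2 * (endpoint⁻¹ ^ e).im := by
  have hcast : -((e + 1 : ℕ) : ℤ) + 1 = -(e : ℤ) := by push_cast; ring
  have h₁ := moment_zero_left_mul (m := -(e + 1 : ℕ)) (by omega)
  have h₂ := moment_zero_right_mul (m := -(e + 1 : ℕ)) (by omega)
  rw [hcast, zpow_neg, zpow_natCast, ← inv_pow] at h₁ h₂
  unfold symmMoment
  push_cast at h₁ h₂ ⊢
  rw [neg_zero]
  linear_combination -h₁ - h₂

lemma exists_lcmUpto_mul_symmMoment_succ_zero {e j : ℕ} (he : 1 ≤ e) (hj : e + 1 ≤ j) :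
    ∃ z : ℤ, (lcmUpto (j - 1) : ℝ) * 2 ^ (j / 2) * symmMoment (e + 1) 0 = z := by
  obtain ⟨w, hw⟩ := dvd_lcmUpto (k := e) (B := j - 1) he (by omega)
  obtain ⟨b, hb⟩ := exists_im_one_sub_endpoint_inv_pow e
  obtain ⟨b', hb'⟩ := exists_im_endpoint_inv_pow e
  have hmoment := mul_symmMoment_succ_zero he
  have htwo : (2 : ℝ) ^ (j / 2) * 2 ^ (e / 2) * 2 = 2 ^ e * 2 ^ (j / 2 + e / 2 + 1 - e) := by
    rw [← pow_add, ← pow_succ, ← pow_add]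
    congr 1
    omega
  have him : (2 : ℝ) ^ (j / 2) * (2 * ((1 - endpoint)⁻¹ ^ e).im)
      = 2 ^ (j / 2 + e / 2 + 1 - e) * b := by
    apply mul_left_cancel₀ (pow_ne_zero e (two_ne_zero' ℝ))
    linear_combination (2 * 2 ^ (j / 2) : ℝ) * hb + (b : ℝ) * htwo
  refine ⟨w * (2 ^ (j / 2 + e / 2 + 1 - e) * b - 2 * 2 ^ (j / 2) * b'), ?_⟩
  rw [hw]
  push_cast
  linear_combination (w * 2 ^ (j / 2) : ℝ) * hmoment + (w : ℝ) * him
    - (2 * w * 2 ^ (j / 2) : ℝ) * hb'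

lemma exists_lcmUpto_mul_symmMoment_zero_sub {n j : ℕ} (hj : n + 1 ≤ j) :
    ∃ z b : ℤ, 0 ≤ b ∧ b ≤ 2 ^ n ∧
      (lcmUpto (j - 1) : ℝ) * 2 ^ (j / 2) * (symmMoment (n + 1) 0 - b * (π / 2)) = z := by
  obtain rfl | hn := Nat.eq_zero_or_pos n
  · exact ⟨0, 1, by norm_num, by norm_num, by simp [symmMoment_one_zero]⟩
  · obtain ⟨z, hz⟩ := exists_lcmUpto_mul_symmMoment_succ_zero hn hj
    exact ⟨z, 0, le_rfl, by positivity, by simpa using hz⟩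

lemma exists_lcmUpto_mul_symmMoment_sub {n i l j : ℕ} (hn : i + l = n + 1) (hi : i ≤ j)
    (hl : l ≤ j) :
    ∃ z b : ℤ, 0 ≤ b ∧ b ≤ 2 ^ n ∧
      (lcmUpto (j - 1) : ℝ) * 2 ^ (j / 2) * (symmMoment i l - b * (π / 2)) = z := by
  induction n generalizing i l with
  | zero =>
    obtain ⟨rfl, rfl⟩ | ⟨rfl, rfl⟩ : i = 1 ∧ l = 0 ∨ i = 0 ∧ l = 1 := by omega
    · exact exists_lcmUpto_mul_symmMoment_zero_sub hi
    · rw [symmMoment_comm]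
      exact exists_lcmUpto_mul_symmMoment_zero_sub hl
  | succ n ih =>
    rcases i with _ | i
    · obtain rfl : l = n + 1 + 1 := by omega
      rw [symmMoment_comm]
      exact exists_lcmUpto_mul_symmMoment_zero_sub hl
    rcases l with _ | l
    · obtain rfl : i = n + 1 := by omega
      exact exists_lcmUpto_mul_symmMoment_zero_sub hi
    obtain ⟨z₁, b₁, hb₁, hb₁', h₁⟩ := ih (i := i) (l := l + 1) (by omega) (by omega) hl
    obtain ⟨z₂, b₂, hb₂, hb₂', h₂⟩ := ih (i := i + 1) (l := l) (by omega) hi (by omega)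
    refine ⟨z₁ + z₂, b₁ + b₂, by omega, by rw [pow_succ]; linarith, ?_⟩
    rw [symmMoment_succ_succ]
    push_cast
    linear_combination h₁ + h₂

lemma exists_lcmUpto_mul_moment_neg_sub {m : ℕ} (hm : 1 ≤ m) :
    ∃ z b : ℤ, 0 ≤ b ∧ b ≤ 2 ^ (2 * m - 1) ∧
      (lcmUpto (m - 1) : ℝ) * 2 ^ (m / 2 + 1) * (moment (-m) (-m) - b * (π / 4)) = z := by
  obtain ⟨z, b, hb, hb', h⟩ :=
    exists_lcmUpto_mul_symmMoment_sub (show m + m = 2 * m - 1 + 1 by omega) le_rfl le_rfl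
  refine ⟨z, b, hb, hb', ?_⟩
  rw [symmMoment] at h
  rw [pow_succ]
  linear_combination h

/-! ### Rational part and `π`-part of the diagonal moments -/

lemma rat_add_mul_pi_div_four_eq_zero {x y : ℚ} (h : (x : ℝ) + y * (π / 4) = 0) :
    x = 0 ∧ y = 0 := by
  have hy : y = 0 := by
    by_contra hy
    have hy_cast : (y : ℝ) ≠ 0 := mod_cast hy
    refine irrational_pi ⟨-4 * x / y, ?_⟩
    push_cast
    field_simp
    linarith
  subst hy
  exact ⟨by simpa using h, rfl⟩

lemma exists_moment_self_eq (k : ℤ) : ∃ (x : ℚ) (b : ℤ), moment k k = x + b * (π / 4) := by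
  have hlcm (B : ℕ) : (lcmUpto B : ℝ) ≠ 0 := mod_cast Nat.lcmUpto_ne_zero B
  obtain hk | hk := le_or_gt 0 k
  · obtain ⟨m, rfl⟩ := Int.eq_ofNat_of_zero_le hk
    obtain ⟨z, hz⟩ := exists_lcmUpto_mul_moment (i := m) (l := m) le_rfl
    refine ⟨2 ^ ((m + 1) / 2) * z / (lcmUpto (m + m + 1) * 5 ^ (m + m + 1)), 0, ?_⟩
    have := hlcm (m + m + 1)
    push_cast
    rw [← hz]
    field_simp
    simp
  · obtain ⟨m, rfl⟩ : ∃ m : ℕ, k = -m := ⟨k.natAbs, by omega⟩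
    have hm : 1 ≤ m := by omega
    obtain ⟨z, b, -, -, h⟩ := exists_lcmUpto_mul_moment_neg_sub hm
    refine ⟨z / (lcmUpto (m - 1) * 2 ^ (m / 2 + 1)), b, ?_⟩
    have := hlcm (m - 1)
    push_cast
    rw [← h]
    field_simp
    ring

/-- The rational part of the diagonal moment `moment k k`. -/
noncomputable def ratPart (k : ℤ) : ℚ := (exists_moment_self_eq k).choose

/-- The coefficient of `π / 4` in the diagonal moment `moment k k`. -/
noncomputable def piPart (k : ℤ) : ℤ := (exists_moment_self_eq k).choose_spec.choose

lemma moment_self_eq (k : ℤ) : moment k k = ratPart k + piPart k * (π / 4) :=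
  (exists_moment_self_eq k).choose_spec.choose_spec

lemma lcmUpto_mul_ratPart_natCast_and_piPart_natCast {n B : ℕ} (hB : 2 * n + 1 ≤ B) :
    (∃ z : ℤ, (lcmUpto B : ℚ) * 5 ^ (2 * n + 1) * ratPart n = 2 ^ ((n + 1) / 2) * z) ∧
      piPart n = 0 := by
  obtain ⟨z, hz⟩ := exists_lcmUpto_mul_moment (i := n) (l := n) (B := B) (by omega)
  rw [moment_self_eq, ← two_mul] at hz
  obtain ⟨hrat, hpi⟩ := rat_add_mul_pi_div_four_eq_zero
    (x := lcmUpto B * 5 ^ (2 * n + 1) * ratPart n - 2 ^ ((n + 1) / 2) * z)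
    (y := lcmUpto B * 5 ^ (2 * n + 1) * piPart n) (by push_cast; linear_combination hz)
  have hlcm : (lcmUpto B : ℚ) * 5 ^ (2 * n + 1) ≠ 0 :=
    mul_ne_zero (mod_cast Nat.lcmUpto_ne_zero B) (by positivity)
  exact ⟨⟨z, sub_eq_zero.1 hrat⟩, mod_cast (mul_eq_zero.1 hpi).resolve_left hlcm⟩

lemma exists_lcmUpto_mul_ratPart_natCast {n B : ℕ} (hB : 2 * n + 1 ≤ B) :
    ∃ z : ℤ, (lcmUpto B : ℚ) * 5 ^ (2 * n + 1) * ratPart n = 2 ^ ((n + 1) / 2) * z :=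
  (lcmUpto_mul_ratPart_natCast_and_piPart_natCast hB).1

lemma piPart_natCast (n : ℕ) : piPart n = 0 :=
  (lcmUpto_mul_ratPart_natCast_and_piPart_natCast le_rfl).2

lemma ratPart_neg_and_piPart_neg {m : ℕ} (hm : 1 ≤ m) :
    (∃ z : ℤ, (lcmUpto (m - 1) : ℚ) * 2 ^ (m / 2 + 1) * ratPart (-m) = z) ∧
      0 ≤ piPart (-m) ∧ piPart (-m) ≤ 2 ^ (2 * m - 1) := by
  obtain ⟨z, b, hb, hb_le, hz⟩ := exists_lcmUpto_mul_moment_neg_sub hm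
  rw [moment_self_eq] at hz
  obtain ⟨hrat, hpi⟩ := rat_add_mul_pi_div_four_eq_zero
    (x := lcmUpto (m - 1) * 2 ^ (m / 2 + 1) * ratPart (-m) - z)
    (y := lcmUpto (m - 1) * 2 ^ (m / 2 + 1) * (piPart (-m) - b))
    (by push_cast; linear_combination hz)
  have hlcm : (lcmUpto (m - 1) : ℚ) * 2 ^ (m / 2 + 1) ≠ 0 :=
    mul_ne_zero (mod_cast Nat.lcmUpto_ne_zero _) (by positivity)
  have hpart : (piPart (-m) : ℚ) = b := sub_eq_zero.1 ((mul_eq_zero.1 hpi).resolve_left hlcm)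
  norm_cast at hpart
  exact ⟨⟨z, sub_eq_zero.1 hrat⟩, hpart ▸ hb, hpart ▸ hb_le⟩

/-! ### Periods of polynomials as linear forms in `1` and `π` -/

/-- The linear functional on integer polynomials sending `X ^ k` to `c (k - m)`. -/
noncomputable def coeffPairing (c : ℤ → ℚ) (m : ℕ) : ℤ[X] →ₗ[ℤ] ℚ :=
  Polynomial.lsum fun k ↦ LinearMap.toSpanSingleton ℤ ℚ (c (k - m))

lemma coeffPairing_eq_sum (c : ℤ → ℚ) (m : ℕ) {U : ℤ[X]} {D : ℕ} (hU : U.natDegree ≤ D) :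
    coeffPairing c m U = ∑ k ∈ Finset.range (D + 1), U.coeff k * c (k - m) := by
  rw [coeffPairing, lsum_apply, sum_over_range' _ (by simp) (D + 1) (by omega)]
  simp

lemma coeffPairing_monomial (c : ℤ → ℚ) (m k : ℕ) (a : ℤ) :
    coeffPairing c m (monomial k a) = a * c (k - m) := by
  rw [coeffPairing, lsum_apply, sum_monomial_index _ _ (by simp)]
  simp

lemma coeffPairing_X_pow_mul (c : ℤ → ℚ) (m i : ℕ) (U : ℤ[X]) :
    coeffPairing c (m + i) (X ^ i * U) = coeffPairing c m U := by
  induction U using Polynomial.induction_on' with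
  | add U V hU hV => rw [mul_add, map_add, map_add, hU, hV]
  | monomial k a =>
    rw [X_pow_mul_monomial, coeffPairing_monomial, coeffPairing_monomial]
    push_cast
    rw [add_sub_add_right_eq_sub]

/-- The rational part of `polyPeriod m U`. -/
noncomputable def ratForm (m : ℕ) : ℤ[X] →ₗ[ℤ] ℚ := coeffPairing ratPart m

/-- The coefficient of `π / 4` in `polyPeriod m U`. -/
noncomputable def piForm (m : ℕ) : ℤ[X] →ₗ[ℤ] ℚ := coeffPairing (fun k ↦ piPart k) m

/-- The function `U(y) / y ^ m` of `y = v (1 - v)`. -/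
noncomputable def polyIntegrand (m : ℕ) (U : ℤ[X]) (v : ℂ) : ℂ :=
  aeval (v * (1 - v)) U / (v * (1 - v)) ^ m

/-- The period of `U(y) / y ^ m`, where `y = v (1 - v)`, along the broken contour. -/
noncomputable def polyPeriod (m : ℕ) (U : ℤ[X]) : ℝ := contourPeriod (polyIntegrand m U)

lemma continuousOn_polyIntegrand (m : ℕ) (U : ℤ[X]) :
    ContinuousOn (polyIntegrand m U) unitStrip := by
  refine ContinuousOn.div ?_ (by fun_prop)
    fun z hz ↦ pow_ne_zero m (mul_one_sub_ne_zero_of_mem_unitStrip hz)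
  exact ((Polynomial.continuous_aeval U).comp (by fun_prop)).continuousOn

lemma polyPeriod_add (m : ℕ) (U V : ℤ[X]) :
    polyPeriod m (U + V) = polyPeriod m U + polyPeriod m V := by
  rw [polyPeriod, polyPeriod, polyPeriod, ← contourPeriod_add (continuousOn_polyIntegrand m U)
    (continuousOn_polyIntegrand m V)]
  congr 1 with v
  simp only [polyIntegrand, map_add, add_div]

lemma polyPeriod_monomial (m k : ℕ) (a : ℤ) :
    polyPeriod m (monomial k a) = a * moment (k - m) (k - m) := by
  rw [polyPeriod, moment, ← contourPeriod_const_mul]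
  refine contourPeriod_congr fun z hz ↦ ?_
  have hy := mul_one_sub_ne_zero_of_mem_unitStrip hz
  rw [polyIntegrand, aeval_monomial, ← mul_zpow, zpow_sub₀ hy, zpow_natCast, zpow_natCast]
  simp [mul_div_assoc]

lemma polyPeriod_eq (m : ℕ) (U : ℤ[X]) :
    polyPeriod m U = ratForm m U + piForm m U * (π / 4) := by
  induction U using Polynomial.induction_on' with
  | add U V hU hV =>
    rw [polyPeriod_add, hU, hV, map_add, map_add]
    push_cast
    ring
  | monomial k a =>
    rw [polyPeriod_monomial, ratForm, piForm, coeffPairing_monomial, coeffPairing_monomial,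
      moment_self_eq]
    push_cast
    ring

lemma ratForm_eq_zero_and_piForm_eq_zero {m : ℕ} {U : ℤ[X]} (h : polyPeriod m U = 0) :
    ratForm m U = 0 ∧ piForm m U = 0 :=
  rat_add_mul_pi_div_four_eq_zero ((polyPeriod_eq m U).symm.trans h)

/-! ### Exact derivatives -/

/-- In the variable `y = v (1 - v)`, the square of `1 - 2 v`. -/
noncomputable def linFactor : ℤ[X] := 1 - 4 * X

/-- The minimal polynomial, up to a constant, of `endpoint * (1 - endpoint)`. -/
noncomputable def quadFactor : ℤ[X] := 25 * X ^ 2 - 14 * X + 2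

lemma aeval_linFactor (y : ℂ) : aeval y linFactor = 1 - 4 * y := by
  simp [linFactor, map_ofNat]

lemma aeval_quadFactor (y : ℂ) : aeval y quadFactor = 25 * y ^ 2 - 14 * y + 2 := by
  simp [quadFactor, map_ofNat]

lemma aeval_quadFactor_endpoint : aeval (endpoint * (1 - endpoint)) quadFactor = 0 := by
  rw [aeval_quadFactor, endpoint]
  linear_combination (1 / 25 * Complex.I ^ 2 - 2 / 25 * Complex.I + 2 / 25) * Complex.I_sq

lemma hasDerivAt_one_sub_two_mul_mul_polyIntegrand (m : ℕ) (U : ℤ[X]) {z : ℂ}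
    (hz : z ∈ unitStrip) :
    HasDerivAt (fun v ↦ (1 - 2 * v) * polyIntegrand m U v)
      (polyIntegrand (m + 1) (-2 * X * U + linFactor * (derivative U * X - C (m : ℤ) * U)) z)
      z := by
  have hy := mul_one_sub_ne_zero_of_mem_unitStrip hz
  have hlin : HasDerivAt (fun v : ℂ ↦ 1 - 2 * v) (-2) z := by
    simpa using ((hasDerivAt_id z).const_mul 2).const_sub 1
  have hquad : HasDerivAt (fun v : ℂ ↦ v * (1 - v)) (1 - 2 * z) z :=
    ((hasDerivAt_id z).mul ((hasDerivAt_id z).const_sub 1)).congr_deriv (by simp; ring)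
  have hpoly : HasDerivAt (fun v : ℂ ↦ aeval (v * (1 - v)) U)
      (aeval (z * (1 - z)) (derivative U) * (1 - 2 * z)) z :=
    HasDerivAt.comp (h₂ := fun y : ℂ ↦ aeval y U) z (U.hasDerivAt_aeval (z * (1 - z))) hquad
  have hpow : HasDerivAt (fun v : ℂ ↦ (v * (1 - v)) ^ m)
      (m * (z * (1 - z)) ^ m / (z * (1 - z)) * (1 - 2 * z)) z := by
    refine ((hasDerivAt_pow m (z * (1 - z))).comp z hquad).congr_deriv ?_
    cases m
    · simp
    · rw [pow_succ _ (_ : ℕ), ← mul_assoc, mul_div_cancel_right₀ _ hy, Nat.add_sub_cancel]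
  refine (hlin.mul (hpoly.div hpow (pow_ne_zero m hy))).congr_deriv ?_
  have hsq : (1 - 2 * z) ^ 2 = 1 - 4 * (z * (1 - z)) := by ring
  simp only [polyIntegrand, map_add, map_mul, map_sub, map_neg, aeval_linFactor, aeval_X,
    map_ofNat, map_natCast, Pi.div_apply]
  generalize z * (1 - z) = y at *
  field_simp
  rw [hsq]
  ring

/-- The boundary terms of the exact differential vanish: `1 - 2 v` kills the one at `1 / 2`, and
the factor `quadFactor` the one at the endpoint. -/
lemma polyPeriod_exact (m : ℕ) {U : ℤ[X]} (hU : quadFactor ∣ U) :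
    polyPeriod (m + 1) (-2 * X * U + linFactor * (derivative U * X - C (m : ℤ) * U)) = 0 := by
  obtain ⟨V, rfl⟩ := hU
  rw [polyPeriod, contourPeriod_eq_sub (continuousOn_polyIntegrand _ _)
    fun z hz ↦ hasDerivAt_one_sub_two_mul_mul_polyIntegrand m _ hz]
  simp [polyIntegrand, aeval_quadFactor_endpoint]

/-! ### Divisibility of the coefficients -/

section CoeffDvd

variable {U V : ℤ[X]} {d : ℤ}

lemma pow_dvd_coeff_mul {f g h : ℕ → ℕ} (hU : ∀ i, d ^ f i ∣ U.coeff i)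
    (hV : ∀ i, d ^ g i ∣ V.coeff i) (hh : ∀ i l, h (i + l) ≤ f i + g l) (k : ℕ) :
    d ^ h k ∣ (U * V).coeff k := by
  rw [coeff_mul]
  refine Finset.dvd_sum fun x hx ↦ ?_
  rw [← Finset.HasAntidiagonal.mem_antidiagonal.1 hx]
  exact (pow_dvd_pow d (hh _ _)).trans (pow_add d _ _ ▸ mul_dvd_mul (hU _) (hV _))

lemma pow_dvd_coeff_pow {w : ℕ → ℕ → ℕ} (hU : ∀ i, d ^ w 1 i ∣ U.coeff i) (hzero : w 0 0 = 0)
    (hadd : ∀ a i l, w (a + 1) (i + l) ≤ w a i + w 1 l) (a k : ℕ) :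
    d ^ w a k ∣ (U ^ a).coeff k := by
  induction a generalizing k with
  | zero => obtain rfl | hk := eq_or_ne k 0 <;> simp [coeff_one, *]
  | succ a ih => exact pow_succ U a ▸ pow_dvd_coeff_mul ih hU (hadd a) k

end CoeffDvd

/-- Salikhov's polynomial `(1 - 4 y) ^ b (25 y² - 14 y + 2) ^ a`. -/
noncomputable def salikhovPoly (a b : ℕ) : ℤ[X] := linFactor ^ b * quadFactor ^ a

lemma two_pow_dvd_coeff_quadFactor (k : ℕ) :
    (2 : ℤ) ^ ((2 * 1 - k + 1) / 2) ∣ quadFactor.coeff k := by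
  rcases k with _ | _ | k
  · simp [quadFactor, coeff_X, coeff_ofNat_mul]
  · simp [quadFactor, coeff_X, coeff_ofNat_mul, coeff_X_pow]
  · simp

lemma twentyFive_pow_dvd_coeff_linFactor (k : ℕ) : (25 : ℤ) ^ (k - 1) ∣ linFactor.coeff k := by
  rcases k with _ | _ | k <;> simp [linFactor, coeff_X, coeff_ofNat_mul, coeff_one]

lemma twentyFive_pow_dvd_coeff_quadFactor (k : ℕ) : (25 : ℤ) ^ (k - 1) ∣ quadFactor.coeff k := by
  rcases k with _ | _ | _ | k <;> simp [quadFactor, coeff_X, coeff_ofNat_mul, coeff_X_pow]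

lemma two_pow_dvd_coeff_salikhovPoly (a b k : ℕ) :
    (2 : ℤ) ^ ((2 * a - k + 1) / 2) ∣ (salikhovPoly a b).coeff k :=
  pow_dvd_coeff_mul (h := fun k ↦ (2 * a - k + 1) / 2) (f := fun _ ↦ 0) (by simp)
    (pow_dvd_coeff_pow (w := fun a k ↦ (2 * a - k + 1) / 2) two_pow_dvd_coeff_quadFactor rfl
      (by omega) a) (by omega) k

lemma twentyFive_pow_dvd_coeff_salikhovPoly (a b k : ℕ) :
    (25 : ℤ) ^ (k - (a + b)) ∣ (salikhovPoly a b).coeff k :=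
  pow_dvd_coeff_mul (h := fun k ↦ k - (a + b))
    (pow_dvd_coeff_pow (w := fun a k ↦ k - a) twentyFive_pow_dvd_coeff_linFactor rfl (by omega) b)
    (pow_dvd_coeff_pow (w := fun a k ↦ k - a) twentyFive_pow_dvd_coeff_quadFactor rfl (by omega) a)
    (by omega) k

lemma natDegree_linFactor_le : linFactor.natDegree ≤ 1 := by
  unfold linFactor
  compute_degree

lemma natDegree_quadFactor_le : quadFactor.natDegree ≤ 2 := by
  unfold quadFactor
  compute_degree

lemma natDegree_salikhovPoly_le (a b : ℕ) : (salikhovPoly a b).natDegree ≤ b + 2 * a := by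
  have hlin := natDegree_pow_le_of_le b natDegree_linFactor_le
  have hquad := natDegree_pow_le_of_le a natDegree_quadFactor_le
  exact natDegree_mul_le.trans (by omega)

/-! ### Denominators and size of the linear forms -/

/-- The rational part of the linear form attached to `(N, j)`, which is the period of
`(1 - 4 y) ^ (2 N + j) (25 y² - 14 y + 2) ^ (4 N) / y ^ (6 N + 1)`. -/
noncomputable def ratCoeff (N j : ℕ) : ℚ := ratForm (6 * N + 1) (salikhovPoly (4 * N) (2 * N + j))

/-- The coefficient of `π / 4` in the linear form attached to `(N, j)`. -/
noncomputable def piCoeff (N j : ℕ) : ℚ := piForm (6 * N + 1) (salikhovPoly (4 * N) (2 * N + j))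

lemma exists_mul_coeffPairing_eq {c : ℤ → ℚ} {m : ℕ} {U : ℤ[X]} {r s : ℚ}
    (hpos : ∀ e : ℕ, e + m ≤ U.natDegree → ∃ z : ℤ, r * (U.coeff (e + m) * c e) = s * z)
    (hneg : ∀ k e : ℕ, 1 ≤ e → k + e = m → ∃ z : ℤ, r * (U.coeff k * c (-e)) = s * z) :
    ∃ z : ℤ, r * coeffPairing c m U = s * z := by
  have hterm (k : ℕ) (hk : k ≤ U.natDegree) : ∃ z : ℤ, r * (U.coeff k * c (k - m)) = s * z := by
    obtain hmk | hkm := le_or_gt m k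
    · obtain ⟨e, rfl⟩ := Nat.exists_eq_add_of_le' hmk
      simpa using hpos e hk
    · obtain ⟨e, rfl⟩ := Nat.exists_eq_add_of_le hkm.le
      simpa using hneg k e (by omega) rfl
  choose! z hz using hterm
  refine ⟨∑ k ∈ Finset.range (U.natDegree + 1), z k, ?_⟩
  rw [coeffPairing_eq_sum c m le_rfl, Finset.mul_sum, Int.cast_sum, Finset.mul_sum]
  exact Finset.sum_congr rfl fun k hk ↦ hz k (Finset.mem_range_succ_iff.1 hk)

lemma exists_mul_coeff_mul_ratPart_natCast {N j e : ℕ} (hj : j ≤ 2) (he : e ≤ 4 * N + 1) :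
    ∃ z : ℤ, 1250 * (lcmUpto (8 * N + 3) : ℚ) *
      ((salikhovPoly (4 * N) (2 * N + j)).coeff (e + (6 * N + 1)) * ratPart e) = 2 ^ N * z := by
  set k := e + (6 * N + 1)
  set n := (salikhovPoly (4 * N) (2 * N + j)).coeff k
  obtain ⟨z, hz⟩ := exists_lcmUpto_mul_ratPart_natCast (n := e) (B := 8 * N + 3) (by omega)
  have htwo : (2 : ℤ) ^ ((2 * (4 * N) - k + 1) / 2) ∣ 625 * n :=
    (two_pow_dvd_coeff_salikhovPoly _ _ k).mul_left 625
  have hfive : (5 : ℤ) ^ (2 * e + 1) ∣ 625 * n := by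
    refine (pow_dvd_pow 5 (show _ ≤ 4 + 2 * (k - (4 * N + (2 * N + j))) by omega)).trans ?_
    rw [pow_add, pow_mul]
    exact mul_dvd_mul_left _ (twentyFive_pow_dvd_coeff_salikhovPoly _ _ k)
  obtain ⟨w, hw⟩ := (IsCoprime.pow (by norm_num : IsCoprime (2 : ℤ) 5)).mul_dvd htwo hfive
  obtain ⟨t, ht⟩ : (2 : ℤ) ^ N ∣ 2 ^ ((2 * (4 * N) - k + 1) / 2) * 2 ^ ((e + 1) / 2) := by
    rw [← pow_add]
    exact pow_dvd_pow 2 (by omega)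
  refine ⟨2 * t * w * z, ?_⟩
  qify at hw ht
  push_cast
  linear_combination 2 * (lcmUpto (8 * N + 3) : ℚ) * ratPart e * hw +
    2 * 2 ^ ((2 * (4 * N) - k + 1) / 2) * (w : ℚ) * hz + 2 * (w : ℚ) * z * ht

lemma exists_mul_coeff_mul_ratPart_neg {N j k e : ℕ} (he : 1 ≤ e) (hke : k + e = 6 * N + 1) :
    ∃ z : ℤ, 1250 * (lcmUpto (8 * N + 3) : ℚ) *
      ((salikhovPoly (4 * N) (2 * N + j)).coeff k * ratPart (-e)) = 2 ^ N * z := by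
  obtain ⟨n, hn⟩ := two_pow_dvd_coeff_salikhovPoly (4 * N) (2 * N + j) k
  obtain ⟨z, hz⟩ := (ratPart_neg_and_piPart_neg he).1
  obtain ⟨w, hw⟩ := lcmUpto_dvd_lcmUpto (show e - 1 ≤ 8 * N + 3 by omega)
  have htwo : (2 : ℚ) ^ ((2 * (4 * N) - k + 1) / 2) * 2 = 2 ^ N * 2 ^ (e / 2 + 1) := by
    rw [← pow_add, ← pow_succ]
    congr 1
    omega
  refine ⟨625 * w * n * z, ?_⟩
  rw [hw, hn]
  push_cast
  linear_combination 625 * (lcmUpto (e - 1) : ℚ) * w * n * ratPart (-e) * htwo +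
    625 * 2 ^ N * (w : ℚ) * n * hz

lemma exists_mul_ratCoeff_eq {N j : ℕ} (hj : j ≤ 2) :
    ∃ z : ℤ, 1250 * (lcmUpto (8 * N + 3) : ℚ) * ratCoeff N j = 2 ^ N * z := by
  refine exists_mul_coeffPairing_eq (fun e he ↦ ?_)
    fun k e he hke ↦ exists_mul_coeff_mul_ratPart_neg he hke
  have hdeg := he.trans (natDegree_salikhovPoly_le _ _)
  exact exists_mul_coeff_mul_ratPart_natCast hj (by omega)

lemma exists_piCoeff_eq (N j : ℕ) : ∃ z : ℤ, piCoeff N j = 2 ^ N * z := by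
  rw [← one_mul (piCoeff N j)]
  refine exists_mul_coeffPairing_eq (fun e _ ↦ ⟨0, by simp [piPart_natCast]⟩)
    fun k e he hke ↦ ?_
  obtain ⟨n, hn⟩ : (2 : ℤ) ^ N ∣ (salikhovPoly (4 * N) (2 * N + j)).coeff k :=
    (pow_dvd_pow 2 (by omega)).trans (two_pow_dvd_coeff_salikhovPoly (4 * N) (2 * N + j) k)
  exact ⟨n * piPart (-e), by rw [hn]; push_cast; ring⟩

lemma exists_ten_pow_mul_lcmUpto_mul_ratForm {U : ℤ[X]} {B m : ℕ} (hU : 2 * U.natDegree + 1 ≤ B)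
    (hm : m ≤ B) : ∃ z : ℤ, (10 : ℚ) ^ (B + 1) * lcmUpto B * ratForm m U = z := by
  have hten : (10 : ℚ) ^ (B + 1) = 2 ^ (B + 1) * 5 ^ (B + 1) := by rw [← mul_pow]; norm_num
  suffices h : ∃ z : ℤ, (10 : ℚ) ^ (B + 1) * lcmUpto B * ratForm m U = 1 * z by
    simpa only [one_mul] using h
  refine exists_mul_coeffPairing_eq (fun e he ↦ ?_) fun k e he hke ↦ ?_
  · obtain ⟨z, hz⟩ := exists_lcmUpto_mul_ratPart_natCast (n := e) (B := B) (by omega)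
    obtain ⟨f, hf⟩ := Nat.exists_eq_add_of_le (show 2 * e + 1 ≤ B + 1 by omega)
    refine ⟨2 ^ (B + 1) * 5 ^ f * U.coeff (e + m) * 2 ^ ((e + 1) / 2) * z, ?_⟩
    rw [hten, hf, pow_add 5]
    push_cast
    linear_combination 2 ^ (2 * e + 1 + f) * 5 ^ f * (U.coeff (e + m) : ℚ) * hz
  · obtain ⟨z, hz⟩ := (ratPart_neg_and_piPart_neg he).1
    obtain ⟨w, hw⟩ := lcmUpto_dvd_lcmUpto (show e - 1 ≤ B by omega)
    obtain ⟨f, hf⟩ := Nat.exists_eq_add_of_le (show e / 2 + 1 ≤ B + 1 by omega)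
    refine ⟨5 ^ (B + 1) * 2 ^ f * U.coeff k * w * z, ?_⟩
    rw [hten, hf, pow_add 2, hw]
    push_cast
    linear_combination 5 ^ (e / 2 + 1 + f) * 2 ^ f * (U.coeff k : ℚ) * w * hz

/-- `IsMajorant U S` says that the coefficients of `S` bound those of `U` in absolute value. -/
def IsMajorant (U S : ℤ[X]) : Prop := ∀ k, |U.coeff k| ≤ S.coeff k

namespace IsMajorant

variable {U S V T : ℤ[X]}

lemma mul (hU : IsMajorant U S) (hV : IsMajorant V T) : IsMajorant (U * V) (S * T) := by
  intro k
  rw [coeff_mul, coeff_mul]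
  refine (Finset.abs_sum_le_sum_abs _ _).trans (Finset.sum_le_sum fun x _ ↦ ?_)
  rw [abs_mul]
  exact mul_le_mul (hU _) (hV _) (abs_nonneg _) ((abs_nonneg _).trans (hU _))

lemma pow (hU : IsMajorant U S) (n : ℕ) : IsMajorant (U ^ n) (S ^ n) := by
  induction n with
  | zero =>
    intro k
    simp only [pow_zero, coeff_one]
    split_ifs <;> simp
  | succ n ih => exact pow_succ U n ▸ pow_succ S n ▸ ih.mul hU

lemma abs_coeffPairing_le (hU : IsMajorant U S) {c : ℤ → ℚ} {m : ℕ} {K r : ℚ}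
    (hc : ∀ k : ℕ, |c (k - m)| ≤ K * r ^ k) : |coeffPairing c m U| ≤ K * aeval r S := by
  rw [coeffPairing_eq_sum c m (le_max_left U.natDegree S.natDegree),
    aeval_eq_sum_range' (Nat.lt_succ_of_le (le_max_right U.natDegree S.natDegree)), Finset.mul_sum]
  refine (Finset.abs_sum_le_sum_abs _ _).trans (Finset.sum_le_sum fun k _ ↦ ?_)
  have hcoeff : |(U.coeff k : ℚ)| ≤ S.coeff k := mod_cast hU k
  calc |(U.coeff k : ℚ) * c (k - m)| ≤ S.coeff k * (K * r ^ k) := by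
        rw [abs_mul]
        exact mul_le_mul hcoeff (hc k) (abs_nonneg _) ((abs_nonneg _).trans hcoeff)
    _ = K * S.coeff k • r ^ k := by rw [zsmul_eq_mul]; ring

end IsMajorant

lemma isMajorant_linFactor : IsMajorant linFactor (1 + 4 * X) := by
  intro k
  rcases k with _ | _ | k <;> simp [linFactor, coeff_X, coeff_ofNat_mul, coeff_one]

lemma isMajorant_quadFactor : IsMajorant quadFactor (25 * X ^ 2 + 14 * X + 2) := by
  intro k
  rcases k with _ | _ | _ | k <;> simp [quadFactor, coeff_X, coeff_ofNat_mul, coeff_X_pow]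

lemma abs_piPart_sub_le (n k : ℕ) :
    |(piPart (k - (n + 1 : ℕ)) : ℚ)| ≤ 2 * 4 ^ n * (1 / 4) ^ k := by
  obtain hnk | hkn := lt_or_ge n k
  · obtain ⟨e, rfl⟩ := Nat.exists_eq_add_of_lt hnk
    have : ((n + e + 1 : ℕ) : ℤ) - (n + 1 : ℕ) = e := by push_cast; ring
    rw [this, piPart_natCast]
    simp
  · obtain ⟨e, rfl⟩ := Nat.exists_eq_add_of_le hkn
    have : (k : ℤ) - (k + e + 1 : ℕ) = -(e + 1 : ℕ) := by push_cast; ring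
    obtain ⟨-, hnonneg, hle⟩ := ratPart_neg_and_piPart_neg (m := e + 1) (by omega)
    rw [this, abs_of_nonneg (mod_cast hnonneg)]
    calc (piPart (-(e + 1 : ℕ)) : ℚ) ≤ 2 ^ (2 * (e + 1) - 1) := mod_cast hle
      _ = 2 * 4 ^ e := by
        rw [show 2 * (e + 1) - 1 = 2 * e + 1 by omega, pow_succ, pow_mul]
        norm_num
        ring
      _ = 2 * 4 ^ (k + e) * (1 / 4) ^ k := by
        rw [pow_add, one_div, inv_pow]
        field_simp

lemma abs_piCoeff_le {N j : ℕ} (hj : j ≤ 2) :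
    |piCoeff N j| ≤ 8 * (4 ^ 7 * (113 / 16) ^ 4) ^ N := by
  have hmaj := (isMajorant_linFactor.pow (2 * N + j)).mul (isMajorant_quadFactor.pow (4 * N))
  have hj_pow : (2 : ℚ) ^ j ≤ 4 := (pow_le_pow_right₀ one_le_two hj).trans (by norm_num)
  calc |piCoeff N j|
      ≤ 2 * 4 ^ (6 * N) * aeval (1 / 4 : ℚ)
          ((1 + 4 * X) ^ (2 * N + j) * (25 * X ^ 2 + 14 * X + 2) ^ (4 * N) : ℤ[X]) :=
        hmaj.abs_coeffPairing_le (abs_piPart_sub_le (6 * N))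
    _ = 2 * (4 ^ 7 * (113 / 16) ^ 4) ^ N * 2 ^ j := by
        simp only [map_mul, map_pow, map_add, map_one, map_ofNat, aeval_X]
        rw [show (1 + 4 * (1 / 4) : ℚ) = 2 by norm_num,
          show (25 * (1 / 4) ^ 2 + 14 * (1 / 4) + 2 : ℚ) = 113 / 16 by norm_num,
          show (4 : ℚ) ^ 7 = 4 ^ 6 * 2 ^ 2 by norm_num]
        simp only [mul_pow, ← pow_mul, pow_add]
        ring
    _ ≤ 2 * (4 ^ 7 * (113 / 16) ^ 4) ^ N * 4 := by gcongr
    _ = 8 * (4 ^ 7 * (113 / 16) ^ 4) ^ N := by ring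

/-! ### Primes dividing the denominators to a lower power -/

lemma exists_derivative_eq_factorial_mul {U : ℤ[X]} {p : ℕ} (hU : U.natDegree + 1 < p) :
    ∃ W : ℤ[X], derivative W = ((p - 1).factorial : ℤ[X]) * U ∧ W.natDegree ≤ p := by
  refine ⟨∑ k ∈ Finset.range (U.natDegree + 1),
    monomial (k + 1) (U.coeff k * ((p - 1).factorial / (k + 1) : ℕ)), ?_, ?_⟩
  · rw [derivative_sum]
    conv_rhs => rw [U.as_sum_range' (U.natDegree + 1) (by omega), Finset.mul_sum]
    refine Finset.sum_congr rfl fun k hk ↦ ?_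
    rw [Finset.mem_range] at hk
    have hdiv : (p - 1).factorial / (k + 1) * (k + 1) = (p - 1).factorial :=
      Nat.div_mul_cancel (Nat.dvd_factorial (by omega) (by omega))
    rw [derivative_monomial, ← C_eq_natCast, C_mul_monomial, mul_assoc, ← Nat.cast_mul, hdiv,
      mul_comm, Nat.add_sub_cancel]
  · refine natDegree_sum_le_of_forall_le _ _ fun k hk ↦ (natDegree_monomial_le _).trans ?_
    rw [Finset.mem_range] at hk
    omega

lemma linFactor_mul_derivative_pow (s : ℕ) :
    linFactor * derivative (linFactor ^ s) = -4 * (s : ℤ[X]) * linFactor ^ s := by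
  have hderiv : derivative linFactor = -4 := by simp [linFactor]
  rcases s with _ | s
  · simp
  · rw [derivative_pow, hderiv, Nat.add_sub_cancel, pow_succ, C_eq_natCast]
    ring

/-- The polynomial `V` for which `p V / y ^ (h p + 1)` collects the terms divisible by `p` in the
derivative of `(1 - 2 v) W(y) (1 - 4 y) ^ s (25 y² - 14 y + 2) ^ (2 s + 1) / y ^ (h p)`, where
`y = v (1 - v)` and `g p = 2 s + 1`. -/
noncomputable def exactCofactor (g h s : ℕ) (W : ℤ[X]) : ℤ[X] :=
  salikhovPoly (2 * s) s * W * (-2 * (g : ℤ[X]) * X * quadFactor +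
    (g : ℤ[X]) * X * linFactor * derivative quadFactor - (h : ℤ[X]) * linFactor * quadFactor)

lemma natDegree_exactCofactor_le (g h s : ℕ) (W : ℤ[X]) :
    (exactCofactor g h s W).natDegree ≤ 5 * s + W.natDegree + 3 := by
  have hlast : (-2 * (g : ℤ[X]) * X * quadFactor +
      (g : ℤ[X]) * X * linFactor * derivative quadFactor -
      (h : ℤ[X]) * linFactor * quadFactor).natDegree ≤ 3 := by
    simp only [linFactor, quadFactor, derivative_add, derivative_sub, derivative_mul,
      derivative_X_pow, derivative_X, derivative_ofNat, zero_mul, zero_add]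
    compute_degree
  have hpoly := natDegree_salikhovPoly_le (2 * s) s
  refine natDegree_mul_le.trans ((add_le_add natDegree_mul_le hlast).trans ?_)
  omega

lemma polyPeriod_exactCofactor {g h p s a b c : ℕ} (hs : g * p = 2 * s + 1) {W F : ℤ[X]}
    (hW : derivative W = F * (salikhovPoly a b * X ^ c)) :
    polyPeriod (h * p + 1) ((p : ℤ[X]) * exactCofactor g h s W +
      F * (X ^ (c + 1) * salikhovPoly (a + (2 * s + 1)) (b + s + 1))) = 0 := by
  have hexact := polyPeriod_exact (h * p) (U := linFactor ^ s * quadFactor ^ (2 * s + 1) * W)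
    (((dvd_pow_self quadFactor (by omega)).mul_left _).mul_right _)
  have hlin := linFactor_mul_derivative_pow s
  have hgp : (g : ℤ[X]) * p = 2 * s + 1 := mod_cast congrArg (Nat.cast (R := ℤ[X])) hs
  have hC : (C ((h * p : ℕ) : ℤ) : ℤ[X]) = h * p := by simp
  rw [← hexact]
  congr 1
  rw [derivative_mul, derivative_mul, hW, derivative_pow quadFactor, hC, C_eq_natCast]
  simp only [Nat.add_sub_cancel, exactCofactor, salikhovPoly]
  push_cast
  linear_combination (linFactor ^ s * quadFactor ^ (2 * s) * W *
    (-2 * X * quadFactor + X * linFactor * derivative quadFactor)) * hgp -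
    X * quadFactor ^ (2 * s + 1) * W * hlin

lemma exists_factorial_mul_ratForm_eq {g h p s a b c m : ℕ} (hs : g * p = 2 * s + 1)
    (hm : h * p = m + c) (hdeg : b + 2 * a + c + 1 < p) :
    ∃ V : ℤ[X], V.natDegree ≤ 5 * s + p + 3 ∧
      ((p - 1).factorial : ℚ) * ratForm m (salikhovPoly (a + (2 * s + 1)) (b + s + 1)) =
        -(p * ratForm (h * p + 1) V) := by
  have hdegU : (salikhovPoly a b * X ^ c).natDegree ≤ b + 2 * a + c :=
    natDegree_mul_le.trans (add_le_add (natDegree_salikhovPoly_le a b) (natDegree_X_pow_le c))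
  obtain ⟨W, hW, hdegW⟩ :=
    exists_derivative_eq_factorial_mul ((Nat.succ_le_succ hdegU).trans_lt hdeg)
  refine ⟨exactCofactor g h s W, (natDegree_exactCofactor_le g h s W).trans (by omega), ?_⟩
  have hshift : ratForm (h * p + 1) (X ^ (c + 1) * salikhovPoly (a + (2 * s + 1)) (b + s + 1)) =
      ratForm m (salikhovPoly (a + (2 * s + 1)) (b + s + 1)) := by
    rw [hm, add_assoc]
    exact coeffPairing_X_pow_mul _ _ _ _
  have hzero := (ratForm_eq_zero_and_piForm_eq_zero (polyPeriod_exactCofactor (h := h) hs hW)).1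
  rw [← nsmul_eq_mul, ← nsmul_eq_mul, map_add, map_nsmul, map_nsmul, hshift, nsmul_eq_mul,
    nsmul_eq_mul] at hzero
  exact eq_neg_of_add_eq_zero_right hzero

lemma not_sq_dvd_lcmUpto {p B : ℕ} (hp : p.Prime) (hB : B < p ^ 2) : ¬ p ^ 2 ∣ lcmUpto B := by
  rw [hp.pow_dvd_iff_le_factorization (Nat.lcmUpto_ne_zero _), Nat.factorization_lcmUpto _ hp]
  intro hlog
  obtain rfl | hB_ne := eq_or_ne B 0
  · simp at hlog
  · exact hB.not_ge (Nat.pow_le_of_le_log hB_ne hlog)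

lemma prime_dvd_of_factorial_mul_eq {p N B L : ℕ} (hp : p.Prime) (hp_large : 5 < p) (hpB : p ≤ B)
    (hB : B < p ^ 2) (hL : p ∣ L) {x y : ℚ} (hxy : ((p - 1).factorial : ℚ) * x = -(p * y)) {z Z : ℤ}
    (hz : (10 : ℚ) ^ (B + 1) * lcmUpto B * y = z) (hZ : 1250 * (L : ℚ) * x = 2 ^ N * Z) :
    (p : ℤ) ∣ Z := by
  obtain ⟨l, hl⟩ := dvd_lcmUpto hp.one_le hpB
  obtain ⟨L, rfl⟩ := hL
  have hpl : ¬ p ∣ l := fun hpl ↦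
    not_sq_dvd_lcmUpto hp hB (hl ▸ sq p ▸ Nat.mul_dvd_mul_left p hpl)
  have hp_ne : (p : ℚ) ≠ 0 := mod_cast hp.ne_zero
  rw [hl] at hz
  have hkey : (((2 ^ N * 10 ^ (B + 1) * (p - 1).factorial * l : ℕ) : ℤ) : ℚ) * Z =
      p * (1250 * L * (-z)) := by
    refine mul_left_cancel₀ hp_ne ?_
    push_cast at hz hZ ⊢
    linear_combination (-(p : ℚ) * 10 ^ (B + 1) * (p - 1).factorial * l) * hZ +
      1250 * (p : ℚ) ^ 2 * L * 10 ^ (B + 1) * l * hxy - 1250 * (p : ℚ) ^ 2 * L * hz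
  have hcop : p.Coprime (2 ^ N * 10 ^ (B + 1) * (p - 1).factorial * l) := by
    have hten : p.Coprime 10 := hp.coprime_iff_not_dvd.2 fun hdvd ↦ by
      obtain h | h := (hp.dvd_mul (m := 2) (n := 5)).1 hdvd <;>
        exact absurd (Nat.le_of_dvd (by norm_num) h) (by omega)
    have htwo : p.Coprime 2 := hten.coprime_dvd_right (by norm_num)
    exact ((Nat.Coprime.pow_right _ htwo).mul_right (Nat.Coprime.pow_right _ hten)).mul_right
      (hp.coprime_factorial_of_lt (by omega)) |>.mul_right (hp.coprime_iff_not_dvd.2 hpl)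
  have hdvd : (p : ℤ) ∣ ((2 ^ N * 10 ^ (B + 1) * (p - 1).factorial * l : ℕ) : ℤ) * Z :=
    ⟨1250 * L * (-z), mod_cast hkey⟩
  exact (Nat.isCoprime_iff_coprime.2 hcop).dvd_of_dvd_mul_left hdvd

/-- The key cancellation: `2 N mod p` between `p / 2` and `2 p / 3` leaves room for an exact
differential whose terms are all divisible by `p` except for the form itself. -/
lemma prime_dvd_of_mul_ratCoeff_eq {N j p k r : ℕ} (hj : j ≤ 2) (hp : p.Prime) (hk : k ≤ 2)
    (hr : 2 * N = k * p + r) (hpr : p ≤ 2 * r) (hrp : 3 * r < 2 * p) (hp_large : 40 < p) {Z : ℤ}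
    (hZ : 1250 * (lcmUpto (8 * N + 3) : ℚ) * ratCoeff N j = 2 ^ N * Z) : (p : ℤ) ∣ Z := by
  have hodd : Odd p := hp.odd_of_ne_two (by omega)
  obtain ⟨s, hs⟩ : Odd ((2 * k + 1) * p) := (odd_two_mul_add_one k).mul hodd
  have hkp : 2 * (k * p) + p = 2 * s + 1 := by rw [← hs]; ring
  have hkp_le : k * p ≤ 2 * p := Nat.mul_le_mul_right p hk
  have hhp : (3 * k + 2) * p = 3 * (k * p) + 2 * p := by ring
  obtain ⟨b, hb⟩ : ∃ b, 2 * N + j = b + s + 1 := ⟨2 * N + j - s - 1, by omega⟩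
  obtain ⟨a, ha⟩ : ∃ a, 4 * N = a + (2 * s + 1) := ⟨4 * N - (2 * s + 1), by omega⟩
  obtain ⟨c, hc⟩ : ∃ c, (3 * k + 2) * p = 6 * N + 1 + c :=
    ⟨(3 * k + 2) * p - (6 * N + 1), by omega⟩
  obtain ⟨V, hdegV, hV⟩ :=
    exists_factorial_mul_ratForm_eq (a := a) (b := b) hs hc (by omega)
  rw [← ha, ← hb] at hV
  obtain ⟨z, hz⟩ := exists_ten_pow_mul_lcmUpto_mul_ratForm (U := V) (B := 40 * p)
    (m := (3 * k + 2) * p + 1) (by omega) (by omega)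
  exact prime_dvd_of_factorial_mul_eq hp (by omega) (by omega) (by nlinarith)
    (dvd_lcmUpto hp.one_le (by omega)) hV hz hZ

/-! ### The common denominator and its growth -/

lemma sum_log_primes_Ioc {a b : ℕ} (hab : a ≤ b) :
    ∑ p ∈ Finset.Ioc a b with p.Prime, log p = theta b - theta a := by
  rw [theta, theta, Nat.floor_natCast, Nat.floor_natCast, eq_sub_iff_add_eq', ← Finset.sum_union]
  · rw [← Finset.filter_union, Finset.Ioc_union_Ioc_eq_Ioc (Nat.zero_le a) hab]
  · exact Finset.disjoint_filter_filter (Finset.Ioc_disjoint_Ioc_of_le le_rfl)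

/-- The primes that divide the denominators of the forms attached to `N` to a lower power than
`lcmUpto (8 * N + 3)`: those in the intervals `(6 N / (3 k + 2), 4 N / (2 k + 1)]`. -/
def cancelledPrimes (N : ℕ) : Finset ℕ :=
  (Finset.range 3).biUnion fun k ↦
    {p ∈ Finset.Ioc (6 * N / (3 * k + 2)) (4 * N / (2 * k + 1)) | p.Prime}

lemma mem_cancelledPrimes {N p : ℕ} :
    p ∈ cancelledPrimes N ↔
      ∃ k ≤ 2, (6 * N < (3 * k + 2) * p ∧ (2 * k + 1) * p ≤ 4 * N) ∧ p.Prime := by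
  simp only [cancelledPrimes, Finset.mem_biUnion, Finset.mem_range, Finset.mem_filter,
    Finset.mem_Ioc, Nat.lt_succ_iff, Nat.div_lt_iff_lt_mul (Nat.succ_pos _),
    Nat.le_div_iff_mul_le (Nat.succ_pos _), mul_comm p]

lemma prime_of_mem_cancelledPrimes {N p : ℕ} (hp : p ∈ cancelledPrimes N) : p.Prime := by
  obtain ⟨-, -, -, hprime⟩ := mem_cancelledPrimes.1 hp
  exact hprime

lemma prod_cancelledPrimes_pos (N : ℕ) : 0 < ∏ p ∈ cancelledPrimes N, p :=
  Finset.prod_pos fun _ hp ↦ (prime_of_mem_cancelledPrimes hp).pos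

lemma sum_log_cancelledPrimes (N : ℕ) :
    ∑ p ∈ cancelledPrimes N, log p = ∑ k ∈ Finset.range 3,
      (theta (4 * N / (2 * k + 1) : ℕ) - theta (6 * N / (3 * k + 2) : ℕ)) := by
  rw [cancelledPrimes, Finset.sum_biUnion]
  · refine Finset.sum_congr rfl fun k hk ↦ sum_log_primes_Ioc ?_
    rw [Finset.mem_range] at hk
    interval_cases k <;> omega
  · intro k hk l hl hkl
    rw [Finset.mem_coe, Finset.mem_range] at hk hl
    refine Finset.disjoint_filter_filter (Finset.disjoint_left.2 fun p hp hp' ↦ ?_)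
    rw [Finset.mem_Ioc] at hp hp'
    interval_cases k <;> interval_cases l <;> omega

/-- A common denominator of the forms attached to `N`. -/
noncomputable def formDenom (N : ℕ) : ℚ :=
  5000 * lcmUpto (8 * N + 3) / ((∏ p ∈ cancelledPrimes N, p : ℕ) * 2 ^ N)

lemma formDenom_pos (N : ℕ) : 0 < formDenom N := by
  have hlcm : (0 : ℚ) < lcmUpto (8 * N + 3) := mod_cast Nat.pos_of_ne_zero (Nat.lcmUpto_ne_zero _)
  have hprod : (0 : ℚ) < (∏ p ∈ cancelledPrimes N, p : ℕ) := mod_cast prod_cancelledPrimes_pos N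
  unfold formDenom
  positivity

lemma prod_cancelledPrimes_dvd {N j : ℕ} (hj : j ≤ 2) (hN : 54 ≤ N) {Z : ℤ}
    (hZ : 1250 * (lcmUpto (8 * N + 3) : ℚ) * ratCoeff N j = 2 ^ N * Z) :
    ((∏ p ∈ cancelledPrimes N, p : ℕ) : ℤ) ∣ Z := by
  rw [Int.natCast_dvd]
  refine Finset.prod_primes_dvd _ (fun p hp ↦ (prime_of_mem_cancelledPrimes hp).prime)
    fun p hp ↦ Int.natCast_dvd.1 ?_
  obtain ⟨k, hk, ⟨hlt, hle⟩, hprime⟩ := mem_cancelledPrimes.1 hp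
  have hlower : (3 * k + 2) * p ≤ 8 * p := Nat.mul_le_mul_right _ (by omega)
  rw [add_mul, mul_assoc] at hlt hle hlower
  exact prime_dvd_of_mul_ratCoeff_eq (r := 2 * N - k * p) hj hprime hk
    (by omega) (by omega) (by omega) (by omega) hZ

lemma prod_cancelledPrimes_dvd_lcmUpto (N : ℕ) :
    ∏ p ∈ cancelledPrimes N, p ∣ lcmUpto (8 * N + 3) := by
  refine Finset.prod_primes_dvd _ (fun p hp ↦ (prime_of_mem_cancelledPrimes hp).prime)
    fun p hp ↦ ?_
  obtain ⟨k, -, ⟨-, hle⟩, hprime⟩ := mem_cancelledPrimes.1 hp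
  have := Nat.le_mul_of_pos_left p (show 0 < 2 * k + 1 by omega)
  exact dvd_lcmUpto hprime.one_le (by omega)

lemma exists_formDenom_mul_ratCoeff {N j : ℕ} (hj : j ≤ 2) (hN : 54 ≤ N) :
    ∃ A : ℤ, formDenom N * ratCoeff N j = A := by
  obtain ⟨Z, hZ⟩ := exists_mul_ratCoeff_eq (N := N) hj
  obtain ⟨w, rfl⟩ := prod_cancelledPrimes_dvd hj hN hZ
  have hprod : ((∏ p ∈ cancelledPrimes N, p : ℕ) : ℚ) ≠ 0 :=
    mod_cast (prod_cancelledPrimes_pos N).ne'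
  refine ⟨4 * w, ?_⟩
  rw [formDenom, div_mul_eq_mul_div, div_eq_iff (by positivity)]
  push_cast at hZ ⊢
  linear_combination 4 * hZ

lemma exists_formDenom_mul_piCoeff (N j : ℕ) : ∃ A : ℤ, formDenom N * piCoeff N j = 4 * A := by
  obtain ⟨z, hz⟩ := exists_piCoeff_eq N j
  obtain ⟨w, hw⟩ := prod_cancelledPrimes_dvd_lcmUpto N
  have hprod : ((∏ p ∈ cancelledPrimes N, p : ℕ) : ℚ) ≠ 0 :=
    mod_cast (prod_cancelledPrimes_pos N).ne'
  refine ⟨1250 * w * z, ?_⟩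
  rw [formDenom, hz, hw, div_mul_eq_mul_div, div_eq_iff (by positivity)]
  push_cast
  ring

lemma tendsto_theta_natDiv_div {a b : ℕ} (ha : 0 < a) (hb : 0 < b) :
    Tendsto (fun N : ℕ ↦ theta (a * N / b : ℕ) / N) atTop (𝓝 ((a : ℝ) / b)) := by
  have hdiv : Tendsto (fun N : ℕ ↦ ((a : ℝ) / b) * N) atTop atTop :=
    tendsto_natCast_atTop_atTop.const_mul_atTop (by positivity)
  have hlim := (tendsto_theta_div_self.comp hdiv).mul_const ((a : ℝ) / b)
  rw [one_mul] at hlim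
  refine hlim.congr' ?_
  filter_upwards [eventually_gt_atTop 0] with N hN
  have hfloor : theta (a * N / b : ℕ) = theta ((a : ℝ) / b * N) := by
    rw [Chebyshev.theta_eq_theta_coe_floor ((a : ℝ) / b * N), ← Nat.floor_div_eq_div (K := ℝ)]
    push_cast
    rw [div_mul_eq_mul_div]
  rw [Function.comp_apply, hfloor]
  field_simp

lemma tendsto_psi_eight_mul_add_three_div :
    Tendsto (fun N : ℕ ↦ psi (8 * N + 3 : ℕ) / N) atTop (𝓝 8) := by
  have harg : Tendsto (fun N : ℕ ↦ ((8 * N + 3 : ℕ) : ℝ)) atTop atTop :=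
    tendsto_natCast_atTop_atTop.comp <|
      tendsto_atTop_mono (fun N ↦ show N ≤ 8 * N + 3 by omega) tendsto_id
  have hratio : Tendsto (fun N : ℕ ↦ 8 + 3 / (N : ℝ)) atTop (𝓝 8) := by
    simpa using (tendsto_const_div_atTop_nhds_zero_nat (3 : ℝ)).const_add 8
  have hlim := (tendsto_psi_div_self.comp harg).mul hratio
  rw [one_mul] at hlim
  refine hlim.congr' ?_
  filter_upwards [eventually_gt_atTop 0] with N hN
  rw [Function.comp_apply]
  push_cast
  field_simp

lemma log_formDenom (N : ℕ) :
    log (formDenom N) = log 5000 + psi (8 * N + 3 : ℕ) -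
      ∑ k ∈ Finset.range 3,
        (theta (4 * N / (2 * k + 1) : ℕ) - theta (6 * N / (3 * k + 2) : ℕ)) - N * log 2 := by
  have hlcm : (lcmUpto (8 * N + 3) : ℝ) ≠ 0 := mod_cast Nat.lcmUpto_ne_zero _
  have hprod : ((∏ p ∈ cancelledPrimes N, p : ℕ) : ℝ) ≠ 0 :=
    mod_cast (prod_cancelledPrimes_pos N).ne'
  have hlog : log (∏ p ∈ cancelledPrimes N, p : ℕ) = ∑ p ∈ cancelledPrimes N, log p := by
    rw [Nat.cast_prod]
    exact log_prod fun p hp ↦ mod_cast (prime_of_mem_cancelledPrimes hp).ne_zero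
  rw [← sum_log_cancelledPrimes, ← hlog, Chebyshev.psi_eq_log_lcmUpto, formDenom]
  push_cast at hprod ⊢
  rw [log_div (by positivity) (by positivity), log_mul (by norm_num) hlcm,
    log_mul hprod (by positivity), log_pow]
  ring

lemma tendsto_log_formDenom_div :
    Tendsto (fun N : ℕ ↦ log (formDenom N) / N) atTop (𝓝 (409 / 60 - log 2)) := by
  have htheta : Tendsto (fun N : ℕ ↦ ∑ k ∈ Finset.range 3,
      (theta (4 * N / (2 * k + 1) : ℕ) / N - theta (6 * N / (3 * k + 2) : ℕ) / N)) atTop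
      (𝓝 (∑ k ∈ Finset.range 3,
        (((4 : ℕ) : ℝ) / (2 * k + 1 : ℕ) - ((6 : ℕ) : ℝ) / (3 * k + 2 : ℕ)))) :=
    tendsto_finsetSum _ fun k _ ↦ (tendsto_theta_natDiv_div (by norm_num) (by omega)).sub
      (tendsto_theta_natDiv_div (by norm_num) (by omega))
  have hlim := (((tendsto_const_div_atTop_nhds_zero_nat (log 5000)).add
    tendsto_psi_eight_mul_add_three_div).sub htheta).sub_const (log 2)
  have hvalue : 0 + 8 - ∑ k ∈ Finset.range 3,
      (((4 : ℕ) : ℝ) / (2 * k + 1 : ℕ) - ((6 : ℕ) : ℝ) / (3 * k + 2 : ℕ)) = 409 / 60 := by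
    norm_num [Finset.sum_range_succ]
  rw [hvalue] at hlim
  refine hlim.congr' ?_
  filter_upwards [eventually_gt_atTop 0] with N hN
  rw [log_formDenom]
  simp only [← sub_div, ← Finset.sum_div]
  field_simp

lemma eventually_formDenom_le : ∀ᶠ N : ℕ in atTop, (formDenom N : ℝ) ≤ exp (6.124 * N) := by
  have hlt := tendsto_log_formDenom_div.eventually_lt_const (u := 6.124)
    (by have := log_two_gt_d9; linarith)
  filter_upwards [hlt, eventually_gt_atTop 0] with N hN hN_pos
  rw [div_lt_iff₀ (mod_cast hN_pos)] at hN
  rw [← log_le_iff_le_exp (mod_cast formDenom_pos N)]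
  exact hN.le

/-! ### One of three consecutive forms does not vanish at a given rational -/

lemma polyPeriod_salikhovPoly_recurrence (m a b : ℕ) :
    polyPeriod (m + 1) (
      C (50 + 100 * b + 200 * (a + 1) - 100 * m : ℤ) * salikhovPoly a (b + 3) +
      C (-38 - 76 * b - 176 * (a + 1) - 24 * m : ℤ) * salikhovPoly a (b + 2) +
      C (-10 - 20 * b - 24 * (a + 1) - 4 * m : ℤ) * salikhovPoly a (b + 1) +
      C (-2 - 4 * b : ℤ) * salikhovPoly a b) = 0 := by
  have hexact := polyPeriod_exact m (U := 64 * (linFactor ^ b * quadFactor ^ (a + 1)))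
    (((dvd_pow_self quadFactor (by omega)).mul_left _).mul_left _)
  convert hexact using 2
  have hlin := linFactor_mul_derivative_pow b
  have hquad : derivative quadFactor = 50 * X - 14 := by
    simp [quadFactor]
    ring
  have hbracket (α β μ : ℤ[X]) :
      (50 + 100 * β + 200 * (α + 1) - 100 * μ) * linFactor ^ 3 +
      (-38 - 76 * β - 176 * (α + 1) - 24 * μ) * linFactor ^ 2 +
      (-10 - 20 * β - 24 * (α + 1) - 4 * μ) * linFactor + (-2 - 4 * β) =
      64 * (-2 * X * quadFactor - 4 * β * X * quadFactor +
        (α + 1) * X * linFactor * (50 * X - 14) - μ * linFactor * quadFactor) := by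
    unfold linFactor quadFactor
    ring
  rw [derivative_mul, derivative_mul, derivative_ofNat, derivative_pow quadFactor, hquad,
    Nat.add_sub_cancel]
  simp only [salikhovPoly, map_add, map_sub, map_mul, map_natCast, map_ofNat, map_one, map_neg,
    Nat.cast_add, Nat.cast_one]
  linear_combination (linFactor ^ b * quadFactor ^ a) * hbracket a b m -
    64 * X * quadFactor ^ (a + 1) * hlin

section Span

variable {ℓ : ℤ[X] →ₗ[ℤ] ℚ} {m a b : ℕ}

lemma map_salikhovPoly_add_eq_zero (hℓ : ∀ U, polyPeriod (m + 1) U = 0 → ℓ U = 0)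
    (hinit : ∀ j ≤ 2, ℓ (salikhovPoly a (b + j)) = 0) (k : ℕ) :
    ℓ (salikhovPoly a (b + k)) = 0 := by
  induction k using Nat.strong_induction_on with
  | _ k ih =>
    rcases Nat.lt_or_ge k 3 with hk | hk
    · exact hinit k (by omega)
    · obtain ⟨k, rfl⟩ := Nat.exists_eq_add_of_le' hk
      have hrec := hℓ _ (polyPeriod_salikhovPoly_recurrence m a (b + k))
      simp only [← smul_eq_C_mul, map_add, map_smul, add_assoc, ih (k + 2) (by omega),
        ih (k + 1) (by omega), ih k (by omega), smul_zero, add_zero, smul_eq_zero] at hrec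
      exact hrec.resolve_left (by push_cast; omega)

lemma map_salikhovPoly_mul_comp_linFactor_eq_zero (hℓ : ∀ U, polyPeriod (m + 1) U = 0 → ℓ U = 0)
    (hinit : ∀ j ≤ 2, ℓ (salikhovPoly a (b + j)) = 0) (G : ℤ[X]) :
    ℓ (salikhovPoly a b * G.comp linFactor) = 0 := by
  induction G using Polynomial.induction_on' with
  | add G H hG hH => rw [add_comp, mul_add, map_add, hG, hH, add_zero]
  | monomial k c =>
    have hpow : salikhovPoly a b * (monomial k c).comp linFactor =
        c • salikhovPoly a (b + k) := by
      rw [monomial_comp, smul_eq_C_mul, salikhovPoly, salikhovPoly]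
      ring
    rw [hpow, map_smul, map_salikhovPoly_add_eq_zero hℓ hinit, smul_zero]

end Span

/-- The substitution `E` for which `E² + 16` and `E²` are divisible by the values of `quadFactor`
and `linFactor` at `v (1 - v)`. -/
noncomputable def substFun (v : ℂ) : ℂ := (1 - 2 * v) * (25 * (1 - 2 * v) ^ 2 + 11)

lemma hasDerivAt_substFun (v : ℂ) :
    HasDerivAt substFun (-2 * (75 * (1 - 2 * v) ^ 2 + 11)) v := by
  have hlin : HasDerivAt (fun v : ℂ ↦ 1 - 2 * v) (-2) v := by
    simpa using ((hasDerivAt_id v).const_mul 2).const_sub 1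
  refine (hlin.mul (((hlin.pow 2).const_mul 25).add_const 11)).congr_deriv ?_
  norm_num
  ring

lemma aeval_linFactor_mul_one_sub (v : ℂ) : aeval (v * (1 - v)) linFactor = (1 - 2 * v) ^ 2 := by
  rw [aeval_linFactor]
  ring

lemma substFun_sq (v : ℂ) :
    substFun v ^ 2 = aeval (v * (1 - v)) linFactor * (25 * (1 - 2 * v) ^ 2 + 11) ^ 2 := by
  rw [aeval_linFactor_mul_one_sub, substFun, mul_pow]

lemma substFun_sq_add_sixteen (v : ℂ) :
    substFun v ^ 2 + 16 =
      16 * aeval (v * (1 - v)) quadFactor * (25 * (1 - 2 * v) ^ 2 + 16) := by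
  rw [aeval_quadFactor, substFun]
  ring

lemma substFun_half : substFun (1 / 2) = 0 := by simp [substFun]

lemma substFun_endpoint : substFun endpoint = -4 * Complex.I := by
  rw [substFun, endpoint]
  linear_combination (-(8 / 5) * Complex.I + 12 / 5) * Complex.I_sq

lemma exists_primitive_sq_add_pow_mul_pow (n k : ℕ) :
    ∃ W : ℤ[X], ∃ K : ℝ, 0 < K ∧ ∀ z : ℂ,
      HasDerivAt (fun z : ℂ ↦ aeval z W) (K * ((z ^ 2 + 16) ^ n * (z ^ 2) ^ k)) z := by
  set U : ℤ[X] := (X ^ 2 + 16) ^ n * (X ^ 2) ^ k with hU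
  obtain ⟨W, hW, -⟩ := exists_derivative_eq_factorial_mul (Nat.lt_succ_self (U.natDegree + 1))
  refine ⟨W, (U.natDegree + 1).factorial, mod_cast Nat.factorial_pos _, fun z ↦
    (W.hasDerivAt_aeval z).congr_deriv ?_⟩
  rw [hW, hU]
  simp [map_ofNat]

/-- Along `-4 i t` with `0 < t < 1` the integrand is positive, up to the even power of `i`. -/
lemma im_primitive_neg_four_mul_I_ne {F : ℂ → ℂ} {K : ℝ} {n k : ℕ} (hK : 0 < K)
    (hF : ∀ z, HasDerivAt F (K * ((z ^ 2 + 16) ^ n * (z ^ 2) ^ (2 * k))) z) :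
    (F (-4 * Complex.I)).im ≠ (F 0).im := by
  intro heq
  have hderiv (t : ℝ) : HasDerivAt (fun t : ℝ ↦ (F (-4 * Complex.I * t)).im)
      (-4 * K * ((16 - 16 * t ^ 2) ^ n * (16 * t ^ 2) ^ (2 * k))) t := by
    have hray : HasDerivAt (fun t : ℝ ↦ -4 * Complex.I * (t : ℂ)) (-4 * Complex.I) t := by
      simpa using ((hasDerivAt_id t).ofReal_comp).const_mul (-4 * Complex.I)
    refine (Complex.imCLM.hasFDerivAt.comp_hasDerivAt t
      ((hF (-4 * Complex.I * t)).comp_of_eq t hray rfl)).congr_deriv ?_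
    have hsq : (-4 * Complex.I * (t : ℂ)) ^ 2 = -(16 * t ^ 2) := by
      rw [mul_pow, mul_pow, Complex.I_sq]
      ring
    have hvalue : (K * (((-4 * Complex.I * t) ^ 2 + 16) ^ n *
        ((-4 * Complex.I * t) ^ 2) ^ (2 * k)) * (-4 * Complex.I) : ℂ) =
        ((-4 * K * ((16 - 16 * t ^ 2) ^ n * (16 * t ^ 2) ^ (2 * k)) : ℝ) : ℂ) * Complex.I := by
      rw [hsq, (even_two_mul k).neg_pow]
      push_cast
      ring
    rw [hvalue, Complex.imCLM_apply, Complex.im_ofReal_mul, Complex.I_im, mul_one]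
  obtain ⟨c, ⟨hc_pos, hc_lt⟩, hc⟩ := exists_hasDerivAt_eq_zero zero_lt_one
    (fun t _ ↦ (hderiv t).continuousAt.continuousWithinAt) (by simpa using heq.symm)
    fun t _ ↦ hderiv t
  have hfactor : 0 < 16 - 16 * c ^ 2 := by nlinarith
  have hvalue : 0 < K * ((16 - 16 * c ^ 2) ^ n * (16 * c ^ 2) ^ (2 * k)) := by positivity
  linarith

/-- A polynomial, in the variable `(1 - 2 v) ^ 2`, whose product with `salikhovPoly (4 * N) (2 * N)`
is, up to a constant, the derivative of a primitive of `(z² + 16) ^ (4 N) z ^ (4 N)` composed with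
`substFun`. -/
noncomputable def witnessPoly (N : ℕ) : ℤ[X] :=
  (75 * X + 11) * (25 * X + 16) ^ (4 * N) * (25 * X + 11) ^ (4 * N)

lemma polyIntegrand_zero_witness (N : ℕ) (v : ℂ) :
    16 ^ (4 * N) * polyIntegrand 0 (salikhovPoly (4 * N) (2 * N) *
        (witnessPoly N).comp linFactor) v =
      (substFun v ^ 2 + 16) ^ (4 * N) * (substFun v ^ 2) ^ (2 * N) *
        (75 * (1 - 2 * v) ^ 2 + 11) := by
  have hwitness (x : ℂ) : aeval x (witnessPoly N) =
      (75 * x + 11) * (25 * x + 16) ^ (4 * N) * (25 * x + 11) ^ (4 * N) := by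
    simp [witnessPoly, map_ofNat]
  rw [substFun_sq_add_sixteen, substFun_sq, polyIntegrand, salikhovPoly, map_mul, map_mul, map_pow,
    map_pow, aeval_comp, aeval_linFactor_mul_one_sub, hwitness]
  generalize (1 - 2 * v) ^ 2 = x
  simp only [mul_pow, ← pow_mul, pow_zero, div_one]
  ring

lemma polyPeriod_zero_witness_ne_zero (N : ℕ) :
    polyPeriod 0 (salikhovPoly (4 * N) (2 * N) * (witnessPoly N).comp linFactor) ≠ 0 := by
  intro hzero
  obtain ⟨W, K, hK, hW⟩ := exists_primitive_sq_add_pow_mul_pow (4 * N) (2 * N)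
  refine im_primitive_neg_four_mul_I_ne hK hW ?_
  have hderiv (z : ℂ) : HasDerivAt (fun v ↦ aeval (substFun v) W)
      (((-2 * K * 16 ^ (4 * N) : ℝ) : ℂ) * polyIntegrand 0
        (salikhovPoly (4 * N) (2 * N) * (witnessPoly N).comp linFactor) z) z := by
    refine ((hW (substFun z)).comp z (hasDerivAt_substFun z)).congr_deriv ?_
    push_cast
    linear_combination 2 * K * polyIntegrand_zero_witness N z
  have hcont := continuousOn_polyIntegrand 0
    (salikhovPoly (4 * N) (2 * N) * (witnessPoly N).comp linFactor)
  have hperiod := contourPeriod_eq_sub (hcont.const_mul _) fun z _ ↦ hderiv z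
  rw [contourPeriod_const_mul, ← polyPeriod, hzero, substFun_half, substFun_endpoint] at hperiod
  linarith

lemma piForm_zero (U : ℤ[X]) : piForm 0 U = 0 := by
  rw [piForm, coeffPairing_eq_sum _ 0 le_rfl]
  refine Finset.sum_eq_zero fun k _ ↦ ?_
  simp [piPart_natCast]

lemma exists_ratCoeff_add_mul_piCoeff_ne_zero (N : ℕ) (ξ : ℚ) :
    ∃ j ≤ 2, ratCoeff N j + ξ * piCoeff N j ≠ 0 := by
  by_contra! hcon
  set ℓ : ℤ[X] →ₗ[ℤ] ℚ := ratForm (6 * N + 1) + ξ • piForm (6 * N + 1) with hℓ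
  have hspan := map_salikhovPoly_mul_comp_linFactor_eq_zero (ℓ := ℓ) (m := 6 * N) (a := 4 * N)
    (b := 2 * N) (fun U hU ↦ by simp [hℓ, ratForm_eq_zero_and_piForm_eq_zero hU]) hcon
    ((1 - X) ^ (6 * N + 1) * witnessPoly N)
  have hfactor : salikhovPoly (4 * N) (2 * N) *
      ((1 - X) ^ (6 * N + 1) * witnessPoly N).comp linFactor = (4 ^ (6 * N + 1) : ℤ) •
        (X ^ (6 * N + 1) * (salikhovPoly (4 * N) (2 * N) * (witnessPoly N).comp linFactor)) := by
    have hsub : 1 - linFactor = C 4 * X := by simp [linFactor]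
    rw [mul_comp, pow_comp, sub_comp, one_comp, X_comp, hsub, smul_eq_C_mul, map_pow]
    ring
  have hshift (c : ℤ → ℚ) (U : ℤ[X]) :
      coeffPairing c (6 * N + 1) (X ^ (6 * N + 1) * U) = coeffPairing c 0 U := by
    rw [← coeffPairing_X_pow_mul c 0 (6 * N + 1), zero_add]
  rw [hfactor, map_smul, smul_eq_zero, or_iff_right (by positivity), hℓ, LinearMap.add_apply,
    LinearMap.smul_apply, ratForm, piForm, hshift, hshift, ← ratForm, ← piForm, piForm_zero,
    smul_zero, add_zero] at hspan
  exact polyPeriod_zero_witness_ne_zero N (by rw [polyPeriod_eq, hspan, piForm_zero]; simp)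

/-! ### The size of the forms -/

/-- A bound for `|(1 - 4 y) (25 y² - 14 y + 2)² / y³|`, where `y = v (1 - v)`, on the contour. -/
noncomputable def decayRate : ℝ := 0.007745

lemma norm_polyIntegrand_salikhovPoly_le {z : ℂ} {γ : ℝ} (N j : ℕ)
    (hlin : ‖aeval (z * (1 - z)) linFactor‖ ≤ 1) (hy : 1 / 5 ≤ ‖z * (1 - z)‖)
    (hγ : ‖aeval (z * (1 - z)) linFactor‖ * ‖aeval (z * (1 - z)) quadFactor‖ ^ 2 ≤
      γ * ‖z * (1 - z)‖ ^ 3) :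
    ‖polyIntegrand (6 * N + 1) (salikhovPoly (4 * N) (2 * N + j)) z‖ ≤ 5 * γ ^ (2 * N) := by
  rw [polyIntegrand, salikhovPoly, map_mul, map_pow, map_pow, norm_div, norm_mul, norm_pow,
    norm_pow, norm_pow]
  set u := ‖aeval (z * (1 - z)) linFactor‖
  set q := ‖aeval (z * (1 - z)) quadFactor‖
  set y := ‖z * (1 - z)‖
  have hy_pos : 0 < y := by linarith
  have hu : 0 ≤ u := norm_nonneg _
  have hpow : 0 ≤ (γ * y ^ 3) ^ (2 * N) := (even_two_mul N).pow_nonneg _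
  rw [div_le_iff₀ (pow_pos hy_pos _)]
  calc u ^ (2 * N + j) * q ^ (4 * N) = u ^ j * (u * q ^ 2) ^ (2 * N) := by ring
    _ ≤ 1 * (γ * y ^ 3) ^ (2 * N) := by
      gcongr
      exact pow_le_one₀ hu hlin
    _ ≤ (γ * y ^ 3) ^ (2 * N) * (5 * y) := by nlinarith
    _ = 5 * γ ^ (2 * N) * y ^ (6 * N + 1) := by ring

lemma first_segment_mul_one_sub (t : ℝ) :
    AffineMap.lineMap (1 / 2) corner t * (1 - AffineMap.lineMap (1 / 2) corner t) =
      (((1 + t ^ 2 / 25) / 4 : ℝ) : ℂ) := by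
  rw [AffineMap.lineMap_apply_module', corner, Complex.real_smul]
  push_cast
  linear_combination (-(t : ℂ) ^ 2 / 100) * Complex.I_sq

lemma norm_polyIntegrand_first_segment_le {t : ℝ} (ht : t ∈ Icc (0 : ℝ) 1) (N j : ℕ) :
    ‖polyIntegrand (6 * N + 1) (salikhovPoly (4 * N) (2 * N + j))
      (AffineMap.lineMap (1 / 2) corner t)‖ ≤ 5 * decayRate ^ (2 * N) := by
  obtain ⟨ht_nonneg, ht_le⟩ := ht
  have hmul := first_segment_mul_one_sub t
  obtain ⟨x, hx⟩ : ∃ x : ℝ, x = t ^ 2 / 25 := ⟨_, rfl⟩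
  rw [← hx] at hmul
  have hx_nonneg : 0 ≤ x := by rw [hx]; positivity
  have hx_le : x ≤ 1 / 25 := by rw [hx]; nlinarith
  have hlin : aeval (((1 + x) / 4 : ℝ) : ℂ) linFactor = ((-x : ℝ) : ℂ) := by
    rw [aeval_linFactor]
    push_cast
    ring
  have hquad : aeval (((1 + x) / 4 : ℝ) : ℂ) quadFactor =
      (((25 * x ^ 2 - 6 * x + 1) / 16 : ℝ) : ℂ) := by
    rw [aeval_quadFactor]
    push_cast
    ring
  apply norm_polyIntegrand_salikhovPoly_le <;> rw [hmul]
  · rw [hlin, Complex.norm_real, norm_neg, norm_of_nonneg hx_nonneg]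
    linarith
  · rw [Complex.norm_of_nonneg (by positivity)]
    linarith
  · rw [hlin, hquad, Complex.norm_real, norm_neg, norm_of_nonneg hx_nonneg,
      Complex.norm_of_nonneg (by nlinarith), Complex.norm_of_nonneg (by positivity), decayRate]
    have hquad_le : (25 * x ^ 2 - 6 * x + 1) ^ 2 ≤ (1 - 5 * x) ^ 2 :=
      pow_le_pow_left₀ (by nlinarith) (by nlinarith) 2
    have hcubic : x * (1 - 5 * x) ^ 2 ≤ 0.0256 := by
      nlinarith [mul_nonneg hx_nonneg (sub_nonneg.2 hx_le),
        mul_nonneg (sq_nonneg x) (sub_nonneg.2 hx_le)]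
    have hcube : 1 ≤ (1 + x) ^ 3 := one_le_pow₀ (by linarith)
    nlinarith [mul_le_mul_of_nonneg_left hquad_le hx_nonneg, hcube]

/-- On each half of `[0, 1]` the difference of the two sides has positive Bernstein
coefficients. -/
lemma second_segment_polynomial_le {s : ℝ} (hs : s ∈ Icc (0 : ℝ) 1) :
    (1 + 2 * s + 2 * s ^ 2) * (1 - s) ^ 2 *
        ((5 + 3 * s + 3 * s ^ 2 + s ^ 3) ^ 2 + 4 * s ^ 2 * (1 + s) ^ 2) ≤
      2 * decayRate * (13 + s) ^ 3 := by
  obtain ⟨hs_nonneg, hs_le⟩ := hs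
  rw [← sub_nonneg, decayRate]
  rcases le_total s (1 / 2) with h | h
  · obtain ⟨y, hy⟩ : ∃ y, y = 1 / 2 - s := ⟨_, rfl⟩
    have hy_nonneg : 0 ≤ y := by linarith
    have hbernstein : 0 ≤ 28900896 / 3125 * y ^ 10 + 253574448 / 3125 * s * y ^ 9 +
        7741704 / 25 * s ^ 2 * y ^ 8 + 2098737588 / 3125 * s ^ 3 * y ^ 7 +
        2833064588 / 3125 * s ^ 4 * y ^ 6 + 2455071524 / 3125 * s ^ 5 * y ^ 5 +
        1376686668 / 3125 * s ^ 6 * y ^ 4 + 4164716 / 25 * s ^ 7 * y ^ 3 +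
        161747568 / 3125 * s ^ 8 * y ^ 2 + 48820528 / 3125 * s ^ 9 * y +
        8674618 / 3125 * s ^ 10 := by positivity
    refine hbernstein.trans_eq ?_
    rw [hy]
    ring
  · obtain ⟨x, hx⟩ : ∃ x, x = s - 1 / 2 := ⟨_, rfl⟩
    obtain ⟨y, hy⟩ : ∃ y, y = 1 - s := ⟨_, rfl⟩
    have hx_nonneg : 0 ≤ x := by linarith
    have hy_nonneg : 0 ≤ y := by linarith
    have hbernstein : 0 ≤ 8674618 / 3125 * y ^ 10 + 124671832 / 3125 * x * y ^ 9 +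
        844409304 / 3125 * x ^ 2 * y ^ 8 + 3364848836 / 3125 * x ^ 3 * y ^ 7 +
        8543482948 / 3125 * x ^ 4 * y ^ 6 + 2865699212 / 625 * x ^ 5 * y ^ 5 +
        16018262612 / 3125 * x ^ 6 * y ^ 4 + 11737280844 / 3125 * x ^ 7 * y ^ 3 +
        5350020176 / 3125 * x ^ 8 * y ^ 2 + 1345572928 / 3125 * x ^ 9 * y +
        136014592 / 3125 * x ^ 10 := by positivity
    refine hbernstein.trans_eq ?_
    rw [hx, hy]
    ring

section SecondSegment

variable (s : ℝ)

lemma second_segment_mul_one_sub :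
    AffineMap.lineMap corner endpoint s * (1 - AffineMap.lineMap corner endpoint s) =
      ((13 + s) / 50 : ℝ) + (s * (1 + s) / 50 : ℝ) * Complex.I := by
  rw [AffineMap.lineMap_apply_module', corner, endpoint, Complex.real_smul]
  push_cast
  linear_combination (-(1 + (s : ℂ)) ^ 2 / 100) * Complex.I_sq

lemma norm_ofReal_add_ofReal_mul_I_sq (a b : ℝ) :
    ‖(a : ℂ) + (b : ℂ) * Complex.I‖ ^ 2 = a ^ 2 + b ^ 2 := by
  rw [Complex.sq_norm, Complex.normSq_add_mul_I]

lemma norm_aeval_linFactor_second_segment :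
    ‖aeval (((13 + s) / 50 : ℝ) + (s * (1 + s) / 50 : ℝ) * Complex.I) linFactor‖ =
      (1 + 2 * s + 2 * s ^ 2) / 25 := by
  have hsquare : aeval (((13 + s) / 50 : ℝ) + (s * (1 + s) / 50 : ℝ) * Complex.I) linFactor =
      ((s / 5 : ℝ) + (-(1 + s) / 5 : ℝ) * Complex.I) ^ 2 := by
    rw [aeval_linFactor]
    push_cast
    linear_combination (-(1 + (s : ℂ)) ^ 2 / 25) * Complex.I_sq
  rw [hsquare, norm_pow, norm_ofReal_add_ofReal_mul_I_sq]
  ring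

lemma norm_aeval_quadFactor_second_segment_sq :
    ‖aeval (((13 + s) / 50 : ℝ) + (s * (1 + s) / 50 : ℝ) * Complex.I) quadFactor‖ ^ 2 =
      (1 - s) ^ 2 * ((5 + 3 * s + 3 * s ^ 2 + s ^ 3) ^ 2 + 4 * s ^ 2 * (1 + s) ^ 2) / 10000 := by
  have hparts : aeval (((13 + s) / 50 : ℝ) + (s * (1 + s) / 50 : ℝ) * Complex.I) quadFactor =
      ((1 - s) * (5 + 3 * s + 3 * s ^ 2 + s ^ 3) / 100 : ℝ) +
        (-(1 - s) * (2 * s * (1 + s)) / 100 : ℝ) * Complex.I := by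
    rw [aeval_quadFactor]
    push_cast
    linear_combination ((s : ℂ) ^ 2 * (1 + s) ^ 2 / 100) * Complex.I_sq
  rw [hparts, norm_ofReal_add_ofReal_mul_I_sq]
  ring

end SecondSegment

lemma norm_polyIntegrand_second_segment_le {s : ℝ} (hs : s ∈ Icc (0 : ℝ) 1) (N j : ℕ) :
    ‖polyIntegrand (6 * N + 1) (salikhovPoly (4 * N) (2 * N + j))
      (AffineMap.lineMap corner endpoint s)‖ ≤ 5 * decayRate ^ (2 * N) := by
  have ⟨hs_nonneg, hs_le⟩ := hs
  have hre : (13 + s) / 50 ≤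
      ‖((13 + s) / 50 : ℝ) + (s * (1 + s) / 50 : ℝ) * Complex.I‖ := by
    simpa using Complex.re_le_norm (((13 + s) / 50 : ℝ) + (s * (1 + s) / 50 : ℝ) * Complex.I)
  apply norm_polyIntegrand_salikhovPoly_le <;> rw [second_segment_mul_one_sub]
  · rw [norm_aeval_linFactor_second_segment]
    nlinarith
  · linarith
  · rw [norm_aeval_linFactor_second_segment, norm_aeval_quadFactor_second_segment_sq]
    have hpoly := second_segment_polynomial_le hs
    calc _ = (1 + 2 * s + 2 * s ^ 2) * (1 - s) ^ 2 *
          ((5 + 3 * s + 3 * s ^ 2 + s ^ 3) ^ 2 + 4 * s ^ 2 * (1 + s) ^ 2) / 250000 := by ring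
      _ ≤ decayRate * ((13 + s) / 50) ^ 3 := by linarith
      _ ≤ _ := by
        unfold decayRate
        gcongr

lemma abs_polyPeriod_salikhovPoly_le (N j : ℕ) :
    |polyPeriod (6 * N + 1) (salikhovPoly (4 * N) (2 * N + j))| ≤ 4 * decayRate ^ (2 * N) := by
  set f := polyIntegrand (6 * N + 1) (salikhovPoly (4 * N) (2 * N + j))
  have hdecay : 0 ≤ decayRate ^ (2 * N) := (even_two_mul N).pow_nonneg _
  have hlength₁ : ‖corner - 1 / 2‖ ≤ 1 / 10 := by simp [corner]
  have hlength₂ : ‖endpoint - corner‖ ≤ 1 / 5 := by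
    have hsub : endpoint - corner = (-1 + Complex.I) / 10 := by
      rw [endpoint, corner]
      ring
    have htriangle := norm_add_le (-1) Complex.I
    rw [norm_neg, norm_one, Complex.norm_I] at htriangle
    rw [hsub, norm_div, Complex.norm_ofNat]
    linarith
  have hfirst := norm_segmentIntegral_le fun t ht ↦ norm_polyIntegrand_first_segment_le ht N j
  have hsecond := norm_segmentIntegral_le fun s hs ↦ norm_polyIntegrand_second_segment_le hs N j
  calc |polyPeriod (6 * N + 1) (salikhovPoly (4 * N) (2 * N + j))|
      = 2 * |(contourIntegral f).im| := by rw [polyPeriod, contourPeriod, abs_mul, abs_two]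
    _ ≤ 2 * (‖segmentIntegral f (1 / 2) corner‖ + ‖segmentIntegral f corner endpoint‖) := by
      gcongr
      exact (Complex.abs_im_le_norm _).trans (norm_add_le _ _)
    _ ≤ 2 * (5 * decayRate ^ (2 * N) * (1 / 10) + 5 * decayRate ^ (2 * N) * (1 / 5)) := by
      gcongr
      · exact hfirst.trans (by gcongr)
      · exact hsecond.trans (by gcongr)
    _ ≤ 4 * decayRate ^ (2 * N) := by linarith

/-! ### The irrationality measure -/

lemma exp_div_pow (a : ℝ) {n : ℕ} (hn : n ≠ 0) : exp (a / n) ^ n = exp a := by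
  rw [← exp_nat_mul, mul_div_cancel₀ _ (Nat.cast_ne_zero.2 hn)]

lemma decayRate_sq_le : decayRate ^ 2 ≤ exp (-(68 / 7)) := by
  have hexp : exp (68 / 7) ≤ 16670 := by
    rw [← pow_le_pow_iff_left₀ (exp_pos _).le (by norm_num) (n := 7) (by norm_num)]
    calc exp (68 / (7 : ℕ)) ^ 7 = exp 1 ^ 68 := by
          rw [exp_div_pow _ (by norm_num), exp_one_pow, Nat.cast_ofNat]
      _ ≤ 2.7182818286 ^ 68 := by gcongr; exact exp_one_lt_d9.le
      _ ≤ 16670 ^ 7 := by norm_num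
  rw [exp_neg, le_inv_comm₀ (by norm_num [decayRate]) (exp_pos _)]
  exact hexp.trans (by norm_num [decayRate])

lemma piCoeff_growth_le : (4 ^ 7 * (113 / 16) ^ 4 : ℝ) ≤ exp (123 / 7) := by
  rw [← pow_le_pow_iff_left₀ (by norm_num) (exp_pos _).le (n := 7) (by norm_num)]
  calc ((4 : ℝ) ^ 7 * (113 / 16) ^ 4) ^ 7 ≤ 2.7182818283 ^ 123 := by norm_num
    _ ≤ exp 1 ^ 123 := by gcongr; exact exp_one_gt_d9.le
    _ = exp (123 / (7 : ℕ)) ^ 7 := by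
      rw [exp_div_pow _ (by norm_num), exp_one_pow, Nat.cast_ofNat]

lemma formDenom_mul_abs_polyPeriod_le {N : ℕ} (hN : (formDenom N : ℝ) ≤ exp (6.124 * N)) (j : ℕ) :
    formDenom N * |polyPeriod (6 * N + 1) (salikhovPoly (4 * N) (2 * N + j))| ≤
      4 * exp (-((68 / 7 - 6.124) * N)) := by
  calc formDenom N * |polyPeriod (6 * N + 1) (salikhovPoly (4 * N) (2 * N + j))|
      ≤ exp (6.124 * N) * (4 * exp (-(68 / 7)) ^ N) := by
        gcongr
        refine (abs_polyPeriod_salikhovPoly_le N j).trans ?_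
        rw [pow_mul]
        gcongr
        exact decayRate_sq_le
    _ = 4 * exp (-((68 / 7 - 6.124) * N)) := by
        rw [← exp_nat_mul, mul_left_comm, ← exp_add]
        ring_nf

lemma formDenom_mul_abs_piCoeff_le {N j : ℕ} (hN : (formDenom N : ℝ) ≤ exp (6.124 * N))
    (hj : j ≤ 2) :
    formDenom N * |(piCoeff N j : ℝ)| ≤ 8 * exp ((6.124 + 123 / 7) * N) := by
  have hpi : |(piCoeff N j : ℝ)| ≤ 8 * (4 ^ 7 * (113 / 16) ^ 4) ^ N := by
    have hcast := (Rat.cast_le (K := ℝ)).2 (abs_piCoeff_le (N := N) hj)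
    push_cast at hcast
    exact hcast
  calc formDenom N * |(piCoeff N j : ℝ)| ≤ exp (6.124 * N) * (8 * exp (123 / 7) ^ N) := by
        gcongr
        refine hpi.trans ?_
        gcongr
        exact piCoeff_growth_le
    _ = 8 * exp ((6.124 + 123 / 7) * N) := by
        rw [← exp_nat_mul, mul_left_comm, ← exp_add]
        ring_nf

lemma exists_integer_form {N : ℕ} (hN : 54 ≤ N) (P : ℤ) {Q : ℤ} (hQ : 0 < Q) :
    ∃ j ≤ 2, ∃ A B : ℤ, formDenom N * ratCoeff N j = A ∧ formDenom N * piCoeff N j = 4 * B ∧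
      A * Q + B * P ≠ 0 := by
  obtain ⟨j, hj, hne⟩ := exists_ratCoeff_add_mul_piCoeff_ne_zero N (P / (4 * Q))
  obtain ⟨A, hA⟩ := exists_formDenom_mul_ratCoeff hj hN
  obtain ⟨B, hB⟩ := exists_formDenom_mul_piCoeff N j
  refine ⟨j, hj, A, B, hA, hB, fun hzero ↦ hne ?_⟩
  have hQ_ne : (Q : ℚ) ≠ 0 := mod_cast hQ.ne'
  have hzero' : (A : ℚ) * Q + B * P = 0 := mod_cast hzero
  refine (mul_eq_zero.1 ?_).resolve_left (mul_ne_zero (formDenom_pos N).ne' hQ_ne)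
  field_simp
  linear_combination 4 * (Q : ℚ) * hA + P * hB + 4 * hzero'

lemma eventually_one_le_pi_form : ∀ᶠ N : ℕ in atTop, ∀ P Q : ℤ, 0 < Q →
    1 ≤ 4 * exp (-((68 / 7 - 6.124) * N)) * Q +
      2 * exp ((6.124 + 123 / 7) * N) * |Q * π - P| := by
  filter_upwards [eventually_formDenom_le, eventually_ge_atTop 54] with N hdenom hN P Q hQ
  obtain ⟨j, hj, A, B, hA, hB, hne⟩ := exists_integer_form hN P hQ
  have hdenom_pos : (0 : ℝ) < formDenom N := mod_cast formDenom_pos N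
  have hA' : (formDenom N : ℝ) * ratCoeff N j = A := mod_cast congrArg (Rat.cast (K := ℝ)) hA
  have hB' : (formDenom N : ℝ) * piCoeff N j = 4 * B := mod_cast congrArg (Rat.cast (K := ℝ)) hB
  have hB_le : |(B : ℝ)| ≤ 2 * exp ((6.124 + 123 / 7) * N) := by
    have hbound := formDenom_mul_abs_piCoeff_le hdenom hj
    rw [← abs_of_pos hdenom_pos, ← abs_mul, hB', abs_mul, abs_of_pos four_pos] at hbound
    linarith
  have hperiod := polyPeriod_eq (6 * N + 1) (salikhovPoly (4 * N) (2 * N + j))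
  rw [← ratCoeff, ← piCoeff] at hperiod
  calc (1 : ℝ) ≤ |(A * Q + B * P : ℝ)| := mod_cast Int.one_le_abs hne
    _ = |formDenom N * polyPeriod (6 * N + 1) (salikhovPoly (4 * N) (2 * N + j)) * Q -
          B * (Q * π - P)| := by
      congr 1
      linear_combination -(Q : ℝ) * hA' - (Q : ℝ) * π / 4 * hB' - formDenom N * Q * hperiod
    _ ≤ formDenom N * |polyPeriod (6 * N + 1) (salikhovPoly (4 * N) (2 * N + j))| * Q +
          |(B : ℝ)| * |Q * π - P| := by
      refine (abs_sub _ _).trans_eq ?_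
      rw [abs_mul, abs_mul, abs_mul, abs_of_pos hdenom_pos, abs_of_pos (Int.cast_pos.2 hQ)]
    _ ≤ _ := add_le_add
      (mul_le_mul_of_nonneg_right (formDenom_mul_abs_polyPeriod_le hdenom j) (mod_cast hQ.le))
      (mul_le_mul_of_nonneg_right hB_le (abs_nonneg _))

section IrrationalityMeasure

variable {α σ τ C₁ C₂ μ : ℝ}

lemma one_div_rpow_le_abs_sub_div {p q : ℝ} (hq : 0 < q)
    (h : 1 ≤ q ^ (μ - 1) * |q * α - p|) : 1 / q ^ μ ≤ |α - p / q| := by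
  have habs : q * |α - p / q| = |q * α - p| := by
    rw [← abs_of_pos hq, ← abs_mul, abs_of_pos hq, mul_sub, mul_div_cancel₀ _ hq.ne']
  rw [div_le_iff₀' (by positivity)]
  calc 1 ≤ q ^ (μ - 1) * (q * |α - p / q|) := by rwa [habs]
    _ = q ^ μ * |α - p / q| := by rw [← mul_assoc, ← rpow_add_one hq.ne', sub_add_cancel]

/-- Choosing `N ≈ log q / τ` makes the first term less than `1 / 2`. -/
lemma eventually_one_div_rpow_le_abs_sub (hσ : 0 ≤ σ) (hτ : 0 < τ) (hC₁ : 0 < C₁) (hC₂ : 0 < C₂)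
    (hform : ∀ᶠ N : ℕ in atTop, ∀ P Q : ℤ, 0 < Q →
      1 ≤ C₁ * exp (-(τ * N)) * Q + C₂ * exp (σ * N) * |Q * α - P|)
    (hμ : 1 + σ / τ < μ) :
    ∀ᶠ q : ℤ in atTop, ∀ p : ℤ, 1 / (q : ℝ) ^ μ ≤ |α - p / q| := by
  have hlog : Tendsto (fun q : ℤ ↦ log q) atTop atTop :=
    tendsto_log_atTop.comp tendsto_intCast_atTop_atTop
  have hceil : Tendsto (fun q : ℤ ↦ ⌈(log q + log (2 * C₁)) / τ⌉₊) atTop atTop :=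
    tendsto_nat_ceil_atTop.comp ((tendsto_atTop_add_const_right _ _ hlog).atTop_div_const hτ)
  have hgap : Tendsto (fun q : ℤ ↦ (μ - 1 - σ / τ) * log q) atTop atTop :=
    hlog.const_mul_atTop (by linarith)
  filter_upwards [hceil.eventually hform, eventually_gt_atTop 0,
    hlog.eventually_ge_atTop (-log (2 * C₁)),
    hgap.eventually_ge_atTop (log (2 * C₂) + σ * (log (2 * C₁) / τ + 1))]
    with q hform_q hq hlog_q hgap_q p
  have hq' : (0 : ℝ) < q := mod_cast hq
  set N := ⌈(log q + log (2 * C₁)) / τ⌉₊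
  have hN_ge : (log q + log (2 * C₁)) / τ ≤ N := Nat.le_ceil _
  have hN_lt : (N : ℝ) < (log q + log (2 * C₁)) / τ + 1 :=
    Nat.ceil_lt_add_one (div_nonneg (by linarith) hτ.le)
  have hsmall : C₁ * exp (-(τ * N)) * q ≤ 1 / 2 := by
    rw [div_le_iff₀' hτ] at hN_ge
    calc C₁ * exp (-(τ * N)) * q ≤ C₁ * exp (-(log q + log (2 * C₁))) * q := by gcongr
      _ = 1 / 2 := by
        rw [← log_mul hq'.ne' (by positivity), exp_neg, exp_log (by positivity)]
        field_simp
  have hlarge : 2 * C₂ * exp (σ * N) ≤ (q : ℝ) ^ (μ - 1) := by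
    rw [rpow_def_of_pos hq', ← exp_log (show 0 < 2 * C₂ by positivity), ← exp_add, exp_le_exp]
    calc log (2 * C₂) + σ * N ≤ log (2 * C₂) + σ * ((log q + log (2 * C₁)) / τ + 1) := by gcongr
      _ = log (2 * C₂) + σ * (log (2 * C₁) / τ + 1) + σ / τ * log q := by ring
      _ ≤ log q * (μ - 1) := by linarith
  refine one_div_rpow_le_abs_sub_div hq' ?_
  have := hform_q p q hq
  have := mul_le_mul_of_nonneg_right hlarge (abs_nonneg (q * α - p))
  linarith

end IrrationalityMeasure

end Salikhov

theorem salikhov_pi_bound_general {μ : ℝ} (hμ : 7.6 ≤ μ) :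
    ∃ q₀ : ℤ, ∀ p q : ℤ, q₀ ≤ q → 1 / (q : ℝ) ^ μ ≤ |π - (p : ℝ) / (q : ℝ)| := by
  obtain ⟨q₀, hq₀⟩ := Filter.eventually_atTop.1 <|
    Salikhov.eventually_one_div_rpow_le_abs_sub (μ := μ) (by norm_num) (by norm_num) four_pos
      two_pos Salikhov.eventually_one_le_pi_form (by norm_num at hμ ⊢; linarith)
  exact ⟨q₀, fun p q hq ↦ hq₀ q hq p⟩

/-- Salikhov's bound: there exists `q₀` such that for all integers `p` and `q`
with `q ≥ q₀`, `|π − p/q| ≥ 1/q^(7.6063)`. -/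
theorem salikhov_pi_bound :
    ∃ q₀ : ℤ, ∀ p q : ℤ, q₀ ≤ q →
      1 / (q : ℝ) ^ (7.6063 : ℝ) ≤ |π - (p : ℝ) / (q : ℝ)| :=
  salikhov_pi_bound_general (by norm_num)
end
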